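/- arXiv:1407.4897 — 6 statements merged into one kernel-verified Lean document; each statement's English description precedes it below -/
import Mathlib

section
/- Let k ≥ 2 and m ≥ 1 be fixed integers. For x > 3 set w := log log log x, W := ∏_{p ≤ w, p prime} p, and B := (φ(W)/W)·log x. Suppose that for each admissible k-tuple (h_1,…,h_k) and (for all sufficiently large x) each residue class b mod W such that b + h_i is coprime to W for all i = 1,…,k, one can find nonnegative weight functions ν = ν_x : ℕ → [0,∞) and constants α > 0 and β_1,…,β_k ≥ 0 (independent of x) such that, as x → ∞: ∑_{x ≤ n ≤ 2x, n ≡ b (mod W)} ν(n) ≤ (α + o(1)) B^{−k} x/W; for each i = 1,…,k, ∑_{x ≤ n ≤ 2x, n ≡ b (mod W)} ν(n) θ(n+h_i) ≥ (β_i − o(1)) B^{1−k} x/φ(W); and β_1 + … + β_k > m·α. Then DHL[k,m+1] holds. -/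
open Filter

/-- A `k`-tuple of increasing integers is admissible if for every prime `p`
its entries do not occupy all residue classes modulo `p`. -/
def Admissible {k : ℕ} (h : Fin k → ℤ) : Prop :=
  StrictMono h ∧ ∀ p : ℕ, p.Prime → ∃ a : ZMod p, ∀ i, (h i : ZMod p) ≠ a

/-- `DHL[k,j]`: for every admissible `k`-tuple `(h₁,…,h_k)` there are infinitely many
`n` for which at least `j` of `n + h₁, …, n + h_k` are prime. -/
def DHL (k j : ℕ) : Prop :=
  ∀ h : Fin k → ℤ, Admissible h →
    ∀ N : ℤ, ∃ n : ℤ, N < n ∧ j ≤ {i : Fin k | Prime (n + h i)}.ncard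

/-- `θ(n) = log n` if `n` is prime and `0` otherwise. -/
noncomputable def primeLog (z : ℤ) : ℝ :=
  letI := Classical.propDecidable (Prime z)
  if Prime z then Real.log (z : ℝ) else 0

/-- `W = W(x) = ∏_{p ≤ w} p` with `w = log log log x`. -/
noncomputable def Wof (x : ℕ) : ℕ :=
  ∏ p ∈ Finset.filter Nat.Prime
      (Finset.Iic ⌊Real.log (Real.log (Real.log (x : ℝ)))⌋₊), p

/-- `B = B(x) = (φ(W)/W) log x`. -/
noncomputable def Bof (x : ℕ) : ℝ :=
  ((Nat.totient (Wof x) : ℝ) / (Wof x : ℝ)) * Real.log (x : ℝ)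

/-!
For `n ≤ 2x` every prime `n + hᵢ` contributes at most `(1 + o(1)) log x` to `∑ᵢ θ(n + hᵢ)`. If at
most `m` of the `n + hᵢ` were prime for every `n` in the residue class, the `ν`-weighted sum of
`∑ᵢ θ(n + hᵢ)` would be at most `(m + o(1)) log x · ∑ ν(n)`. Since `B^{1-k} x / φ(W)` is exactly
`log x` times `B^{-k} x / W`, this would force `∑ᵢ βᵢ ≤ m α`. The Chinese remainder theorem turns
admissibility into the existence of a residue class `b` with every `b + hᵢ` coprime to `W`.
-/

theorem Admissible.exists_not_dvd_add {k : ℕ} {h : Fin k → ℤ} (hh : Admissible h) {p : ℕ}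
    (hp : p.Prime) : ∃ r : ℕ, ∀ i, ¬ (p : ℤ) ∣ r + h i := by
  have : NeZero p := ⟨hp.ne_zero⟩
  obtain ⟨a, ha⟩ := hh.2 p hp
  refine ⟨(-a).val, fun i hdvd => ha i ?_⟩
  have hzero : -a + (h i : ZMod p) = 0 := by
    simpa using (ZMod.intCast_zmod_eq_zero_iff_dvd _ p).2 hdvd
  exact (neg_add_eq_zero.1 hzero).symm

theorem Admissible.exists_gcd_add_eq_one {k : ℕ} {h : Fin k → ℤ} (hh : Admissible h) {N : ℕ}
    (hN : N ≠ 0) : ∃ b : ℕ, ∀ i, Int.gcd (b + h i) N = 1 := by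
  choose! r hr using fun (p : ℕ) (hp : p.Prime) => hh.exists_not_dvd_add hp
  obtain ⟨b, hb⟩ := Nat.chineseRemainderOfFinset r id N.primeFactors
    (fun p hp => (Nat.prime_of_mem_primeFactors hp).ne_zero)
    (fun p hp q hq hpq => (Nat.coprime_primes (Nat.prime_of_mem_primeFactors hp)
      (Nat.prime_of_mem_primeFactors hq)).2 hpq)
  refine ⟨b, fun i => Nat.coprime_of_dvd fun p hp hpb hpN => hr p hp i ?_⟩
  have hbr : (p : ℤ) ∣ r p - b :=
    Nat.modEq_iff_dvd.1 (hb p (Nat.mem_primeFactors.2 ⟨hp, hpN, hN⟩))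
  have hsum : (p : ℤ) ∣ r p - b + (b + h i) := dvd_add hbr (Int.natCast_dvd.2 hpb)
  rwa [← add_assoc, sub_add_cancel] at hsum

theorem primeLog_of_prime {z : ℤ} (hz : Prime z) : primeLog z = Real.log z :=
  if_pos hz

theorem primeLog_of_not_prime {z : ℤ} (hz : ¬ Prime z) : primeLog z = 0 :=
  if_neg hz

theorem primeLog_le_log {z : ℤ} {y : ℝ} (hz : Prime z) (hzy : |(z : ℝ)| ≤ y) :
    primeLog z ≤ Real.log y := by
  -- A negative `z` may be `Prime` in `ℤ`; `Real.log` then takes the value `log |z|`.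
  rw [primeLog_of_prime hz, ← Real.log_abs]
  exact Real.log_le_log (abs_pos.2 (Int.cast_ne_zero.2 hz.ne_zero)) hzy

theorem tendsto_log_const_mul_div_log {c : ℝ} (hc : c ≠ 0) :
    Tendsto (fun y => Real.log (c * y) / Real.log y) atTop (nhds 1) := by
  have hlim : Tendsto (fun y => Real.log c / Real.log y + 1) atTop (nhds (0 + 1)) :=
    (Real.tendsto_log_atTop.const_div_atTop _).add_const 1
  rw [zero_add] at hlim
  refine hlim.congr' ?_
  filter_upwards [eventually_gt_atTop 1] with y hy
  rw [Real.log_mul hc (by positivity), add_div, div_self (Real.log_pos hy).ne']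

section Pigeonhole

variable {ι : Type*} [Fintype ι]

theorem sum_primeLog_le_ncard_mul_log {z : ι → ℤ} {y : ℝ} (hz : ∀ i, |(z i : ℝ)| ≤ y) :
    ∑ i, primeLog (z i) ≤ {i | Prime (z i)}.ncard * Real.log y := by
  classical
  calc ∑ i, primeLog (z i) = ∑ i with Prime (z i), primeLog (z i) :=
        (Finset.sum_filter_of_ne fun i _ hi =>
          not_imp_comm.1 primeLog_of_not_prime hi).symm
    _ ≤ ∑ i with Prime (z i), Real.log y :=
        Finset.sum_le_sum fun i hi => primeLog_le_log (Finset.mem_filter.1 hi).2 (hz i)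
    _ = {i | Prime (z i)}.ncard * Real.log y := by
        rw [Finset.sum_const, nsmul_eq_mul, ← Set.ncard_coe_finset, Finset.coe_filter_univ]

theorem exists_lt_ncard_prime_of_lt_sum {σ : Type*} {S : Finset σ} {ν : σ → ℝ} {z : σ → ι → ℤ}
    {y : ℝ} {m : ℕ} (hν : ∀ n ∈ S, 0 ≤ ν n) (hy : 1 ≤ y) (hz : ∀ n ∈ S, ∀ i, |(z n i : ℝ)| ≤ y)
    (hlt : m * Real.log y * ∑ n ∈ S, ν n < ∑ i, ∑ n ∈ S, ν n * primeLog (z n i)) :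
    ∃ n ∈ S, m < {i | Prime (z n i)}.ncard := by
  have hsum : ∑ n ∈ S, ν n * (m * Real.log y) < ∑ n ∈ S, ν n * ∑ i, primeLog (z n i) := by
    simp_rw [← Finset.sum_mul, Finset.mul_sum]
    rwa [Finset.sum_comm, mul_comm]
  obtain ⟨n, hn, hlt_n⟩ := Finset.exists_lt_of_sum_lt hsum
  have hcount : m * Real.log y < {i | Prime (z n i)}.ncard * Real.log y :=
    (lt_of_mul_lt_mul_left hlt_n (hν n hn)).trans_le (sum_primeLog_le_ncard_mul_log (hz n hn))
  exact ⟨n, hn, Nat.cast_lt.1 (lt_of_mul_lt_mul_right hcount (Real.log_nonneg hy))⟩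

theorem eventually_exists_lt_ncard_prime_add {m C : ℕ} {h : ι → ℤ} {S : ℕ → Finset ℕ}
    {ν : ℕ → ℕ → ℝ} {A a : ℕ → ℝ} {b : ι → ℕ → ℝ} {α : ℝ} {β : ι → ℝ}
    (hS : ∀ x, ∀ n ∈ S x, n ≤ C * x) (hν : ∀ x, ∀ n ∈ S x, 0 ≤ ν x n)
    (hA : ∀ᶠ x in atTop, 0 < A x)
    (ha : Tendsto a atTop (nhds α)) (hb : ∀ i, Tendsto (b i) atTop (nhds (β i)))
    (hupper : ∀ᶠ x in atTop, ∑ n ∈ S x, ν x n ≤ a x * A x)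
    (hlower : ∀ i, ∀ᶠ x : ℕ in atTop,
      b i x * (A x * Real.log x) ≤ ∑ n ∈ S x, ν x n * primeLog (n + h i))
    (hαβ : m * α < ∑ i, β i) :
    ∀ᶠ x in atTop, ∃ n ∈ S x, m < {i | Prime ((n : ℤ) + h i)}.ncard := by
  have hratio : Tendsto (fun x : ℕ => Real.log ((C + 1) * x) / Real.log x) atTop (nhds 1) :=
    (tendsto_log_const_mul_div_log (by positivity)).comp tendsto_natCast_atTop_atTop
  have hlimits : ∀ᶠ x : ℕ in atTop,
      m * (Real.log ((C + 1) * x) / Real.log x) * a x < ∑ i, b i x :=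
    ((hratio.const_mul _).mul ha).eventually_lt (tendsto_finsetSum _ fun i _ => hb i)
      (by rwa [mul_one])
  have hshift : ∀ᶠ x : ℕ in atTop, ∀ i, (h i).natAbs ≤ x :=
    eventually_all.2 fun i => eventually_ge_atTop _
  filter_upwards [hlimits, hshift, hA, hupper, eventually_all.2 hlower, eventually_gt_atTop 1]
    with x hlim hhx hAx hup hlow hx
  have hx' : (1 : ℝ) < x := Nat.one_lt_cast.2 hx
  have hlog : 0 < Real.log x := Real.log_pos hx'
  have hy : 1 ≤ (C + 1) * (x : ℝ) := by nlinarith [C.cast_nonneg (α := ℝ)]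
  refine exists_lt_ncard_prime_of_lt_sum (hν x) hy (fun n hn i => ?_) ?_
  · have hni : |(n : ℤ) + h i| ≤ (C + 1) * x := by
      have := hS x n hn
      have := hhx i
      grind
    exact_mod_cast hni
  · calc m * Real.log ((C + 1) * x) * ∑ n ∈ S x, ν x n
        ≤ m * Real.log ((C + 1) * x) * (a x * A x) :=
          mul_le_mul_of_nonneg_left hup (mul_nonneg m.cast_nonneg (Real.log_nonneg hy))
      _ = m * (Real.log ((C + 1) * x) / Real.log x) * a x * (A x * Real.log x) := by
          field_simp
      _ < (∑ i, b i x) * (A x * Real.log x) := mul_lt_mul_of_pos_right hlim (by positivity)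
      _ ≤ ∑ i, ∑ n ∈ S x, ν x n * primeLog (n + h i) := by
          rw [Finset.sum_mul]
          exact Finset.sum_le_sum fun i _ => hlow i

end Pigeonhole

theorem Wof_pos (x : ℕ) : 0 < Wof x :=
  Finset.prod_pos fun _ hp => (Finset.mem_filter.1 hp).2.pos

theorem totient_Wof_pos (x : ℕ) : 0 < Nat.totient (Wof x) :=
  Nat.totient_pos.2 (Wof_pos x)

theorem Bof_pos {x : ℕ} (hx : 1 < x) : 0 < Bof x :=
  mul_pos (div_pos (Nat.cast_pos.2 (totient_Wof_pos x)) (Nat.cast_pos.2 (Wof_pos x)))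
    (Real.log_pos (Nat.one_lt_cast.2 hx))

theorem Bof_div_totient_Wof (x : ℕ) : Bof x / Nat.totient (Wof x) = Real.log x / Wof x := by
  have hφ : (Nat.totient (Wof x) : ℝ) ≠ 0 := Nat.cast_ne_zero.2 (totient_Wof_pos x).ne'
  rw [Bof]
  field_simp

theorem Bof_rpow_one_sub_mul_div_totient_Wof {x : ℕ} (hx : 1 < x) (s : ℝ) :
    Bof x ^ (1 - s) * x / Nat.totient (Wof x) = Bof x ^ (-s) * x / Wof x * Real.log x := by
  calc Bof x ^ (1 - s) * x / Nat.totient (Wof x)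
      = Bof x ^ (-s) * x * (Bof x / Nat.totient (Wof x)) := by
        rw [sub_eq_add_neg, Real.rpow_add (Bof_pos hx), Real.rpow_one]
        ring
    _ = Bof x ^ (-s) * x / Wof x * Real.log x := by
        rw [Bof_div_totient_Wof]
        ring

/-- **Polymath8b, Lemma 3.4 (criterion for DHL)**: let `k ≥ 2` and `m ≥ 1` be fixed.
Suppose that for each admissible `k`-tuple `(h₁,…,h_k)` and each residue class
`b (W)` (a function of `x`, as `W = W(x)`) with `b + hᵢ` coprime to `W` for all `i`,
one can find nonnegative weights `ν = ν_x : ℕ → ℝ⁺` and fixed `α > 0`,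
`β₁, …, β_k ≥ 0` such that, as `x → ∞`:
`∑_{x ≤ n ≤ 2x, n ≡ b (W)} ν(n) ≤ (α + o(1)) B^{-k} x/W`,
`∑_{x ≤ n ≤ 2x, n ≡ b (W)} ν(n) θ(n+hᵢ) ≥ (βᵢ − o(1)) B^{1-k} x/φ(W)` for each `i`, and
`β₁ + ⋯ + β_k > m α`.  Then `DHL[k,m+1]` holds. -/
theorem dhl_criterion (k m : ℕ) (hk : 2 ≤ k) (hm : 1 ≤ m)
    (H : ∀ h : Fin k → ℤ, Admissible h →
      ∀ b : ℕ → ℕ,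
        (∀ x : ℕ, ∀ i : Fin k, Int.gcd ((b x : ℤ) + h i) (Wof x) = 1) →
        ∃ (ν : ℕ → ℕ → ℝ) (α : ℝ) (β : Fin k → ℝ),
          0 < α ∧ (∀ i, 0 ≤ β i) ∧ (∀ x n, 0 ≤ ν x n) ∧
          (∃ err : ℕ → ℝ, Tendsto err atTop (nhds 0) ∧
            ∀ᶠ x : ℕ in atTop,
              (∑ n ∈ (Finset.Icc x (2 * x)).filter (fun n => n % Wof x = b x % Wof x),
                  ν x n)
                ≤ (α + err x) * Bof x ^ (-(k : ℝ)) * x / Wof x) ∧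
          (∀ i : Fin k, ∃ err : ℕ → ℝ, Tendsto err atTop (nhds 0) ∧
            ∀ᶠ x : ℕ in atTop,
              (β i - err x) * Bof x ^ (1 - (k : ℝ)) * x / Nat.totient (Wof x)
                ≤ ∑ n ∈ (Finset.Icc x (2 * x)).filter
                      (fun n => n % Wof x = b x % Wof x),
                    ν x n * primeLog ((n : ℤ) + h i)) ∧
          (m : ℝ) * α < ∑ i, β i) :
    DHL k (m + 1) := by
  intro h hh N
  choose b hb using fun x => hh.exists_gcd_add_eq_one (Wof_pos x).ne'
  obtain ⟨ν, α, β, -, -, hν, ⟨err, herr, hupper⟩, hlower, hαβ⟩ := H h hh b hb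
  choose err' herr' hlower using hlower
  have hscale : ∀ᶠ x : ℕ in atTop, 0 < Bof x ^ (-(k : ℝ)) * x / Wof x := by
    filter_upwards [eventually_gt_atTop 1] with x hx
    have := Bof_pos hx
    have := Wof_pos x
    positivity
  have hprimes := eventually_exists_lt_ncard_prime_add (C := 2)
    (fun x n hn => (Finset.mem_Icc.1 (Finset.mem_filter.1 hn).1).2) (fun x n _ => hν x n) hscale
    (by simpa using herr.const_add α) (fun i => by simpa using (herr' i).const_sub (β i))
    (by simpa only [mul_div_assoc, mul_assoc] using hupper)
    (fun i => by
      filter_upwards [hlower i, eventually_gt_atTop 1] with x hx hx1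
      rw [← Bof_rpow_one_sub_mul_div_totient_Wof hx1]
      simpa only [mul_div_assoc, mul_assoc] using hx)
    hαβ
  obtain ⟨x, ⟨n, hn, hcard⟩, hNx⟩ := (hprimes.and (eventually_gt_atTop N.toNat)).exists
  have hxn : x ≤ n := (Finset.mem_Icc.1 (Finset.mem_filter.1 hn).1).1
  exact ⟨n, by omega, hcard⟩
end

section
/- The minimal diameter of an admissible 50-tuple is 246, the minimal diameter of an admissible 51-tuple is 252, and the minimal diameter of an admissible 54-tuple is 270. -/
/-!
Translate an admissible `k`-tuple so that it starts at `0`. If its diameter is less than `n`, it is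
a subset of `{0, …, n - 1}` which, for every prime `p`, avoids some residue class modulo `p`; that
class is not the class of `0`. For `(n, k) = (246, 50), (252, 51), (270, 54)` this is impossible:
deleting one nonzero class modulo each of `2, 3, 5, …, 23` in turn, and following all choices of
these classes, always leaves fewer than `k` integers. The upper bounds come from explicit tuples;
modulo a prime `p > k` a `k`-tuple cannot occupy all classes.
-/

theorem exists_zmod_ne_iff_exists_emod_ne {ι : Type*} (f : ι → ℤ) (p : ℕ) [NeZero p] :
    (∃ a : ZMod p, ∀ i, (f i : ZMod p) ≠ a) ↔ ∃ r < p, ∀ i, f i % (p : ℤ) ≠ r := by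
  have cast_eq_iff (i : ι) {r : ℕ} (hr : r < p) : (f i : ZMod p) = r ↔ f i % (p : ℤ) = r := by
    have hr' : (r : ℤ) % p = r := Int.emod_eq_of_lt (by positivity) (mod_cast hr)
    rw [← Int.cast_natCast r, ZMod.intCast_eq_intCast_iff', hr']
  constructor
  · rintro ⟨a, ha⟩
    refine ⟨a.val, a.val_lt, fun i hi => ha i ?_⟩
    rwa [← cast_eq_iff i a.val_lt, ZMod.natCast_zmod_val] at hi
  · rintro ⟨r, hr, hfr⟩
    exact ⟨r, fun i hi => hfr i ((cast_eq_iff i hr).1 hi)⟩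

theorem admissible_of_forall_le {k : ℕ} {h : Fin k → ℤ} (hmono : StrictMono h)
    (hres : ∀ p ≤ k, 2 ≤ p → ∃ r < p, ∀ i, h i % (p : ℤ) ≠ r) : Admissible h := by
  refine ⟨hmono, fun p hp => ?_⟩
  have : NeZero p := ⟨hp.ne_zero⟩
  rcases le_or_gt p k with hpk | hkp
  · exact (exists_zmod_ne_iff_exists_emod_ne h p).2 (hres p hpk hp.two_le)
  · by_contra! hsurj
    have hcard : Fintype.card (ZMod p) ≤ Fintype.card (Fin k) :=
      Fintype.card_le_of_surjective (fun i => (h i : ZMod p)) hsurj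
    rw [ZMod.card, Fintype.card_fin] at hcard
    omega

/-- The code of a finite set of natural numbers, as a word with one block of nine bits per integer.
Intersection becomes bitwise conjunction, and since `512 ≡ 1` modulo `511` the code of a set with at
most `510` elements reveals its cardinality in a single reduction. -/
def blockCode (S : Finset ℕ) : ℕ :=
  ∑ i ∈ S, 512 ^ i

theorem testBit_blockCode (S : Finset ℕ) (j : ℕ) :
    (blockCode S).testBit j ↔ ∃ i ∈ S, 9 * i = j := by
  have hcode : blockCode S = ∑ j ∈ S.image (9 * ·), 2 ^ j := by
    rw [Finset.sum_image (by simp), blockCode]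
    simp only [pow_mul, Nat.reducePow]
  rw [hcode, ← Nat.mem_bitIndices, ← List.mem_toFinset, Finset.toFinset_bitIndices_sum_two_pow,
    Finset.mem_image]

theorem blockCode_inter (S T : Finset ℕ) : blockCode (S ∩ T) = blockCode S &&& blockCode T := by
  refine Nat.eq_of_testBit_eq fun j => ?_
  rw [Nat.testBit_and, Bool.eq_iff_iff, Bool.and_eq_true]
  simp only [testBit_blockCode, Finset.mem_inter]
  grind

theorem blockCode_mod_eq_card {S : Finset ℕ} (hS : S.card < 511) : blockCode S % 511 = S.card := by
  have hmod : blockCode S ≡ ∑ i ∈ S, 1 ^ i [MOD 511] :=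
    Nat.ModEq.sum fun i _ => Nat.ModEq.pow i (by decide)
  simp only [one_pow, Finset.sum_const, smul_eq_mul, mul_one] at hmod
  rw [hmod, Nat.mod_eq_of_lt hS]

/-- The integers in `{0, …, n - 1}` that survive the removal of the residue class of `r`
modulo `p`. -/
def survivors (n p r : ℕ) : Finset ℕ :=
  {i ∈ Finset.range n | i % p ≠ r}

/-- Exhaustive sieving of the set with code `c`, a subset of `{0, …, n - 1}`: however one nonzero
residue class modulo each `p` in the list is chosen, at some point of the removal of these classes
fewer than `k` elements are left. -/
def sieveFallsBelow (n k : ℕ) : List ℕ → ℕ → Bool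
  | [], c => c % 511 < k
  | p :: ps, c => c % 511 < k ||
      (List.range' 1 (p - 1)).all fun r =>
        sieveFallsBelow n k ps (c &&& blockCode (survivors n p r))

theorem card_lt_of_sieveFallsBelow {n k : ℕ} (hn : n < 511) {T : Finset ℕ} {ps : List ℕ}
    (hT : ∀ p ∈ ps, ∃ r, 0 < r ∧ r < p ∧ ∀ i ∈ T, i % p ≠ r) {S : Finset ℕ}
    (hTS : T ⊆ S) (hSn : S ⊆ Finset.range n)
    (hS : sieveFallsBelow n k ps (blockCode S) = true) : T.card < k := by
  have card_T_lt {S : Finset ℕ} (hTS : T ⊆ S) (hSn : S ⊆ Finset.range n)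
      (hcode : blockCode S % 511 < k) : T.card < k := by
    have hcard : S.card ≤ n := by simpa using Finset.card_le_card hSn
    rw [blockCode_mod_eq_card (by omega)] at hcode
    exact (Finset.card_le_card hTS).trans_lt hcode
  induction ps generalizing S with
  | nil => exact card_T_lt hTS hSn (by simpa only [sieveFallsBelow, decide_eq_true_eq] using hS)
  | cons p ps ih =>
    simp only [sieveFallsBelow, Bool.or_eq_true, decide_eq_true_eq, List.all_eq_true,
      ← blockCode_inter] at hS
    rcases hS with hcode | hS
    · exact card_T_lt hTS hSn hcode
    · obtain ⟨r, hr0, hrp, hTr⟩ := hT p List.mem_cons_self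
      have hT_survives : T ⊆ S ∩ survivors n p r := Finset.subset_inter hTS fun i hi =>
        Finset.mem_filter.2 ⟨hSn (hTS hi), hTr i hi⟩
      have hr : r ∈ List.range' 1 (p - 1) := List.mem_range'_1.2 (by omega)
      exact ih (fun q hq => hT q (List.mem_cons_of_mem p hq)) hT_survives
        (Finset.inter_subset_left.trans hSn) (hS r hr)

namespace Admissible

variable {k : ℕ} {h : Fin (k + 1) → ℤ}

theorem exists_mod_ne_of_eq_add (hh : Admissible h) {x : Fin (k + 1) → ℕ}
    (hx : ∀ i, h i = h 0 + x i) {p : ℕ} (hp : p.Prime) :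
    ∃ r, 0 < r ∧ r < p ∧ ∀ i, x i % p ≠ r := by
  have : NeZero p := ⟨hp.ne_zero⟩
  obtain ⟨a, ha⟩ := hh.2 p hp
  have hshift : ∀ i, ((x i : ℤ) : ZMod p) ≠ a - h 0 := fun i hi => ha i <| by
    rw [hx i, Int.cast_add, hi, add_sub_cancel]
  obtain ⟨r, hrp, hr⟩ :=
    (exists_zmod_ne_iff_exists_emod_ne (fun i => (x i : ℤ)) p).1 ⟨_, hshift⟩
  have hxr : ∀ i, x i % p ≠ r := fun i => mod_cast hr i
  have hx0 : x 0 = 0 := by simpa using hx 0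
  have hr0 : 0 ≠ r := by simpa [hx0] using hxr 0
  exact ⟨r, Nat.pos_of_ne_zero hr0.symm, hrp, hxr⟩

theorem le_diameter_of_sieveFallsBelow (hh : Admissible h) {n : ℕ} (hn : n < 511) {ps : List ℕ}
    (hps : ∀ p ∈ ps, p.Prime)
    (hsieve : sieveFallsBelow n (k + 1) ps (blockCode (Finset.range n)) = true) :
    (n : ℤ) ≤ h (Fin.last k) - h 0 := by
  by_contra! hlt
  have hx : ∀ i, ∃ x : ℕ, h i = h 0 + x := fun i => by
    obtain ⟨x, hx⟩ := Int.le.dest (hh.1.monotone (Fin.zero_le i))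
    exact ⟨x, hx.symm⟩
  choose x hx using hx
  have hxn : Finset.univ.image x ⊆ Finset.range n := Finset.image_subset_iff.2 fun i _ => by
    have hle : h i ≤ h (Fin.last k) := hh.1.monotone (Fin.le_last i)
    rw [Finset.mem_range]
    linarith [hx i]
  have hinj : Function.Injective x := fun i j hij => hh.1.injective (by rw [hx i, hx j, hij])
  have hcard : (Finset.univ.image x).card < k + 1 := by
    refine card_lt_of_sieveFallsBelow hn (fun p hp => ?_) hxn subset_rfl hsieve
    obtain ⟨r, hr0, hrp, hr⟩ := hh.exists_mod_ne_of_eq_add hx (hps p hp)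
    exact ⟨r, hr0, hrp, Finset.forall_mem_image.2 fun i _ => hr i⟩
  rw [Finset.card_image_of_injective _ hinj, Finset.card_univ, Fintype.card_fin] at hcard
  exact lt_irrefl _ hcard

end Admissible

/-- Moduli of the exhaustive sieve: the primes up to `23` settle all three lower bounds. -/
def sievePrimes : List ℕ :=
  [2, 3, 5, 7, 11, 13, 17, 19, 23]

theorem prime_of_mem_sievePrimes : ∀ p ∈ sievePrimes, p.Prime := by
  norm_num [sievePrimes]

theorem sieveFallsBelow_246_50 :
    sieveFallsBelow 246 50 sievePrimes (blockCode (Finset.range 246)) = true := by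
  decide +kernel

theorem sieveFallsBelow_252_51 :
    sieveFallsBelow 252 51 sievePrimes (blockCode (Finset.range 252)) = true := by
  decide +kernel

theorem sieveFallsBelow_270_54 :
    sieveFallsBelow 270 54 sievePrimes (blockCode (Finset.range 270)) = true := by
  decide +kernel

/-- An admissible `50`-tuple of diameter `246`, the smallest possible. -/
def narrowTuple50 : Fin 50 → ℤ :=
  ![0, 4, 6, 10, 16, 18, 24, 28, 34, 36, 60, 64, 66, 70, 76, 78, 84, 88, 90, 94, 100, 106,
    108, 114, 120, 126, 130, 136, 144, 148, 154, 156, 160, 168, 174, 178, 186, 190, 196, 198,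
    204, 214, 216, 220, 226, 234, 238, 240, 244, 246]

theorem admissible_narrowTuple50 : Admissible narrowTuple50 :=
  admissible_of_forall_le (by rw [Fin.strictMono_iff_lt_succ]; decide +kernel) (by decide +kernel)

/-- An admissible `51`-tuple of diameter `252`, the smallest possible. -/
def narrowTuple51 : Fin 51 → ℤ :=
  ![0, 6, 10, 12, 16, 22, 28, 30, 36, 40, 42, 48, 52, 58, 66, 70, 72, 76, 78, 82, 96, 100,
    106, 108, 118, 120, 126, 132, 136, 142, 148, 150, 160, 162, 166, 168, 180, 192, 196, 198,
    202, 208, 210, 220, 226, 232, 238, 240, 246, 250, 252]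

theorem admissible_narrowTuple51 : Admissible narrowTuple51 :=
  admissible_of_forall_le (by rw [Fin.strictMono_iff_lt_succ]; decide +kernel) (by decide +kernel)

/-- An admissible `54`-tuple of diameter `270`, the smallest possible. -/
def narrowTuple54 : Fin 54 → ℤ :=
  ![0, 4, 6, 10, 16, 18, 24, 28, 30, 34, 40, 46, 48, 54, 60, 66, 70, 76, 84, 88, 94, 96, 100,
    108, 114, 118, 126, 130, 136, 138, 144, 150, 154, 156, 160, 174, 178, 180, 184, 186, 196,
    198, 208, 210, 214, 228, 238, 240, 244, 250, 258, 264, 268, 270]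

theorem admissible_narrowTuple54 : Admissible narrowTuple54 :=
  admissible_of_forall_le (by rw [Fin.strictMono_iff_lt_succ]; decide +kernel) (by decide +kernel)

/-- **H(50) = 246, H(51) = 252, H(54) = 270**: the minimal diameter of an admissible
`50`-tuple (resp. `51`-tuple, `54`-tuple) is `246` (resp. `252`, `270`). -/
theorem H50_H51_H54 :
    ((∃ h : Fin 50 → ℤ, Admissible h ∧ h 49 - h 0 = 246) ∧
      (∀ h : Fin 50 → ℤ, Admissible h → 246 ≤ h 49 - h 0)) ∧
    ((∃ h : Fin 51 → ℤ, Admissible h ∧ h 50 - h 0 = 252) ∧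
      (∀ h : Fin 51 → ℤ, Admissible h → 252 ≤ h 50 - h 0)) ∧
    ((∃ h : Fin 54 → ℤ, Admissible h ∧ h 53 - h 0 = 270) ∧
      (∀ h : Fin 54 → ℤ, Admissible h → 270 ≤ h 53 - h 0)) := by
  refine ⟨⟨⟨narrowTuple50, admissible_narrowTuple50, by decide +kernel⟩, fun h hh => ?_⟩,
    ⟨⟨narrowTuple51, admissible_narrowTuple51, by decide +kernel⟩, fun h hh => ?_⟩,
    ⟨⟨narrowTuple54, admissible_narrowTuple54, by decide +kernel⟩, fun h hh => ?_⟩⟩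
  · exact hh.le_diameter_of_sieveFallsBelow (by norm_num) prime_of_mem_sievePrimes
      sieveFallsBelow_246_50
  · exact hh.le_diameter_of_sieveFallsBelow (by norm_num) prime_of_mem_sievePrimes
      sieveFallsBelow_252_51
  · exact hh.le_diameter_of_sieveFallsBelow (by norm_num) prime_of_mem_sievePrimes
      sieveFallsBelow_270_54
end

section
/- Let k ≥ 2, and suppose there exists a positive square-integrable function F : R_k → (0,∞) (extended by zero to [0,∞)^k) and λ > 0 satisfying the eigenfunction equation λ·F(t_1,…,t_k) = ∑_{i=1}^k ∫_0^∞ F(t_1,…,t_{i−1},t_i',t_{i+1},…,t_k) dt_i' for all (t_1,…,t_k) ∈ R_k. Then λ = M_k. -/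
open MeasureTheory

/-- The scaled simplex `c · R_k = {t ∈ [0,∞)^k : t₁ + ⋯ + t_k ≤ c}`. -/
def simplex (k : ℕ) (c : ℝ) : Set (Fin k → ℝ) :=
  {t | (∀ i, 0 ≤ t i) ∧ ∑ i, t i ≤ c}

/-- `I(F) = ∫_{[0,∞)^k} F(t)² dt`. -/
noncomputable def sieveI {k : ℕ} (F : (Fin k → ℝ) → ℝ) : ℝ :=
  ∫ t in {t : Fin k → ℝ | ∀ i, 0 ≤ t i}, (F t) ^ 2

/-- `J_i(F) = ∫_{[0,∞)^{k-1}} (∫_0^∞ F(t) dt_i)² dt_1 ⋯ dt_{i-1} dt_{i+1} ⋯ dt_k`. -/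
noncomputable def sieveJ {k : ℕ} (i : Fin k) (F : (Fin k → ℝ) → ℝ) : ℝ :=
  ∫ y in {y : {j : Fin k // j ≠ i} → ℝ | ∀ j, 0 ≤ y j},
    (∫ s in Set.Ioi (0 : ℝ), F (fun j => if h : j = i then s else y ⟨j, h⟩)) ^ 2

/-- `M_k`, the supremum of `(∑ᵢ J_i(F))/I(F)` over square-integrable `F` supported
on the simplex `R_k` that are not almost everywhere zero. -/
noncomputable def Mquant (k : ℕ) : ℝ :=
  sSup {r : ℝ | ∃ F : (Fin k → ℝ) → ℝ, MemLp F 2 volume ∧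
    (∀ t, t ∉ simplex k 1 → F t = 0) ∧ ¬ (F =ᵐ[volume] 0) ∧
    r = (∑ i, sieveJ i F) / sieveI F}


/-!
The criterion is Schur's test. Write `𝓛 f (t) = ∑ᵢ ∫ f(t₁, …, tᵢ', …, t_k) dtᵢ'`. By Cauchy–Schwarz
along a line, `(∫ g)² ≤ (∫ g² / f) (∫ f)`; integrating over all lines in all directions and using
Fubini, `∑ᵢ J_i(g) ≤ ∫ (g² / f) 𝓛 f`. If `𝓛 f = c f` the right-hand side is `c I(g)`, and for
`g = f` Cauchy–Schwarz is an equality, so the supremum `c` is attained at `f`. The inequality is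
proved for `[0, ∞]`-valued functions, where `g² / f` needs no integrability.
-/

open scoped ENNReal

theorem integrable_of_memLp_of_support_subset {α E : Type*} [MeasurableSpace α]
    [NormedAddCommGroup E] {μ : Measure α} {A : Set α} {f : α → E} {p : ℝ≥0∞} (hp : 1 ≤ p)
    (hfp : MemLp f p μ) (hf : Function.support f ⊆ A) (hA : μ A ≠ ∞) : Integrable f μ := by
  have : IsFiniteMeasure (μ.restrict A) := ⟨by rwa [Measure.restrict_apply_univ, lt_top_iff_ne_top]⟩
  exact (integrableOn_iff_integrable_of_support_subset hf).1 ((hfp.restrict A).integrable hp)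

theorem integral_Ioi_zero_eq_integral {E : Type*} [NormedAddCommGroup E] [NormedSpace ℝ E]
    {φ : ℝ → E} (hφ : ∀ s < 0, φ s = 0) : ∫ s in Set.Ioi 0, φ s = ∫ s, φ s := by
  rw [← integral_Ici_eq_integral_Ioi]
  exact setIntegral_eq_integral_of_forall_compl_eq_zero fun s hs => hφ s (not_le.1 hs)

section SchurTest

theorem sq_lintegral_le_of_sq_le_mul {α : Type*} [MeasurableSpace α] {μ : Measure α}
    {f g h : α → ℝ≥0∞} (hf : AEMeasurable f μ) (hh : AEMeasurable h μ)
    (hg : ∀ᵐ a ∂μ, g a ^ 2 ≤ h a * f a) :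
    (∫⁻ a, g a ∂μ) ^ 2 ≤ (∫⁻ a, h a ∂μ) * ∫⁻ a, f a ∂μ := by
  have sqrt_sq (x : ℝ≥0∞) : (x ^ (1 / 2 : ℝ)) ^ 2 = x := by
    rw [← ENNReal.rpow_mul_natCast]; norm_num
  calc (∫⁻ a, g a ∂μ) ^ 2
      ≤ (∫⁻ a, h a ^ (1 / 2 : ℝ) * f a ^ (1 / 2 : ℝ) ∂μ) ^ 2 := by
        gcongr 1
        refine lintegral_mono_ae (hg.mono fun a ha => ?_)
        rwa [← ENNReal.pow_le_pow_left_iff two_ne_zero, mul_pow, sqrt_sq, sqrt_sq]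
    _ ≤ ((∫⁻ a, h a ∂μ) ^ (1 / 2 : ℝ) * (∫⁻ a, f a ∂μ) ^ (1 / 2 : ℝ)) ^ 2 := by
        gcongr
        exact ENNReal.lintegral_mul_norm_pow_le hh hf (by norm_num) (by norm_num) (by norm_num)
    _ = (∫⁻ a, h a ∂μ) * ∫⁻ a, f a ∂μ := by rw [mul_pow, sqrt_sq, sqrt_sq]

variable {ι : Type*} [DecidableEq ι] {X : ι → Type*} [∀ i, MeasurableSpace (X i)]

/-- The splitting of a point `t` of `∏ⱼ Xⱼ` into its coordinates other than `i` and `t i`, as a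
measurable equivalence: the lines parallel to the `i`-th axis are the fibres of the first component.
It is `Equiv.piSplitAt` with the factors exchanged, so that Fubini integrates over lines first. -/
def splitAt (i : ι) : (∀ j, X j) ≃ᵐ (∀ j : {j // j ≠ i}, X j) × X i where
  toEquiv := (Equiv.piSplitAt i X).trans (Equiv.prodComm _ _)
  measurable_toFun := by
    change Measurable fun t : ∀ j, X j => ((fun j => t j : ∀ j : {j // j ≠ i}, X j), t i)
    fun_prop
  measurable_invFun := by
    refine measurable_pi_lambda _ fun j => ?_
    rcases eq_or_ne j i with rfl | hj
    · simpa using measurable_snd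
    · simp only [Equiv.symm_trans_apply, Equiv.prodComm_symm, Equiv.prodComm_apply,
        Equiv.piSplitAt_symm_apply, Prod.fst_swap, dif_neg hj]
      exact (measurable_pi_apply (⟨j, hj⟩ : {j // j ≠ i})).comp measurable_fst

theorem splitAt_symm_apply_self (i : ι) (y : ∀ j : {j // j ≠ i}, X j) (s : X i) :
    (splitAt i).symm (y, s) i = s :=
  congrArg Prod.snd ((splitAt i).apply_symm_apply (y, s))

theorem splitAt_symm_apply_ne {i : ι} (y : ∀ j : {j // j ≠ i}, X j) (s : X i)
    (j : {j // j ≠ i}) : (splitAt i).symm (y, s) j = y j :=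
  congrFun (congrArg Prod.fst ((splitAt i).apply_symm_apply (y, s))) j

theorem splitAt_symm_fst (i : ι) (t : ∀ j, X j) (s : X i) :
    (splitAt i).symm ((splitAt i t).1, s) = Function.update t i s := by
  refine (splitAt i).symm_apply_eq.2 (Prod.ext (funext fun j => ?_) ?_)
  · exact (Function.update_of_ne j.2 s t).symm
  · exact (Function.update_self i s t).symm

variable [Fintype ι] (μ : ∀ i, Measure (X i)) [∀ i, SigmaFinite (μ i)]

theorem measurePreserving_splitAt (i : ι) :
    MeasurePreserving (splitAt i) (Measure.pi μ)
      ((Measure.pi fun j : {j // j ≠ i} => μ j).prod (μ i)) := by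
  suffices h : MeasurePreserving (splitAt i).symm
      ((Measure.pi fun j : {j // j ≠ i} => μ j).prod (μ i)) (Measure.pi μ) from h.symm
  refine ⟨(splitAt i).symm.measurable, (Measure.pi_eq fun s _ => ?_).symm⟩
  have preimage_box : (splitAt i).symm ⁻¹' Set.univ.pi s =
      (Set.univ.pi fun j : {j // j ≠ i} => s j) ×ˢ s i := by
    ext p
    obtain ⟨t, rfl⟩ := (splitAt i).surjective p
    rw [Set.mem_preimage, MeasurableEquiv.symm_apply_apply, Set.mem_prod]
    constructor
    · exact fun ht => ⟨fun j _ => ht j trivial, ht i trivial⟩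
    · rintro ⟨ht, hti⟩ j -
      rcases eq_or_ne j i with rfl | hj
      exacts [hti, ht ⟨j, hj⟩ trivial]
  rw [(splitAt i).symm.map_apply, preimage_box, Measure.prod_prod, Measure.pi_pi,
    Fintype.prod_eq_mul_prod_subtype_ne _ i, mul_comm]

theorem quasiMeasurePreserving_fst_splitAt (i : ι) :
    Measure.QuasiMeasurePreserving (fun t => (splitAt i t).1) (Measure.pi μ)
      (Measure.pi fun j : {j // j ≠ i} => μ j) :=
  Measure.quasiMeasurePreserving_fst.comp (measurePreserving_splitAt μ i).quasiMeasurePreserving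

variable {μ} in
theorem aemeasurable_lintegral_splitAt {f : (∀ j, X j) → ℝ≥0∞}
    (hf : AEMeasurable f (Measure.pi μ)) (i : ι) :
    AEMeasurable (fun y => ∫⁻ s, f ((splitAt i).symm (y, s)) ∂μ i)
      (Measure.pi fun j : {j // j ≠ i} => μ j) :=
  (hf.comp_quasiMeasurePreserving
    (measurePreserving_splitAt μ i).symm.quasiMeasurePreserving).lintegral_prod_right'

variable {μ} in
theorem aemeasurable_lintegral_update {f : (∀ j, X j) → ℝ≥0∞} (hf : AEMeasurable f (Measure.pi μ))
    (i : ι) : AEMeasurable (fun t => ∫⁻ s, f (Function.update t i s) ∂μ i) (Measure.pi μ) := by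
  simp only [← splitAt_symm_fst]
  exact (aemeasurable_lintegral_splitAt hf i).comp_quasiMeasurePreserving
    (quasiMeasurePreserving_fst_splitAt μ i)

theorem lintegral_mul_lintegral_splitAt {f h : (∀ j, X j) → ℝ≥0∞}
    (hf : AEMeasurable f (Measure.pi μ)) (hh : AEMeasurable h (Measure.pi μ)) (i : ι) :
    ∫⁻ y, (∫⁻ s, h ((splitAt i).symm (y, s)) ∂μ i) * (∫⁻ s, f ((splitAt i).symm (y, s)) ∂μ i)
      ∂Measure.pi (fun j : {j // j ≠ i} => μ j) =
      ∫⁻ t, h t * ∫⁻ s, f (Function.update t i s) ∂μ i ∂Measure.pi μ := by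
  have split := (measurePreserving_splitAt μ i).symm
  have hh' := hh.comp_quasiMeasurePreserving split.quasiMeasurePreserving
  simp only [← splitAt_symm_fst]
  rw [← split.lintegral_comp_emb (splitAt i).symm.measurableEmbedding]
  simp only [MeasurableEquiv.apply_symm_apply]
  rw [lintegral_prod (fun p => h ((splitAt i).symm p) * _)
    (hh'.mul (aemeasurable_lintegral_splitAt hf i).comp_fst)]
  refine lintegral_congr_ae ?_
  filter_upwards [hh'.aestronglyMeasurable.prodMk_left] with y hy
  exact (lintegral_mul_const'' _ hy.aemeasurable).symm

/-- The operator `f ↦ ∑ᵢ ∫ f(t₁, …, tᵢ', …, t_k) dtᵢ'` of the eigenfunction equation, on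
`[0, ∞]`-valued functions. -/
noncomputable def lineSum (f : (∀ j, X j) → ℝ≥0∞) (t : ∀ j, X j) : ℝ≥0∞ :=
  ∑ i, ∫⁻ s, f (Function.update t i s) ∂μ i

/-- The integral over all lines parallel to the `i`-th axis of the squared integral along the line:
the functional `J_i` for `[0, ∞]`-valued functions. -/
noncomputable def sqMarginal (i : ι) (f : (∀ j, X j) → ℝ≥0∞) : ℝ≥0∞ :=
  ∫⁻ y, (∫⁻ s, f ((splitAt i).symm (y, s)) ∂μ i) ^ 2 ∂Measure.pi (fun j : {j // j ≠ i} => μ j)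

theorem lintegral_mul_lineSum {f h : (∀ j, X j) → ℝ≥0∞}
    (hf : AEMeasurable f (Measure.pi μ)) (hh : AEMeasurable h (Measure.pi μ)) :
    ∫⁻ t, h t * lineSum μ f t ∂Measure.pi μ =
      ∑ i, ∫⁻ t, h t * ∫⁻ s, f (Function.update t i s) ∂μ i ∂Measure.pi μ := by
  simp only [lineSum, Finset.mul_sum]
  exact lintegral_finsetSum' _ fun i _ => hh.mul (aemeasurable_lintegral_update hf i)

theorem sum_sqMarginal_eq_lintegral_mul_lineSum {f : (∀ j, X j) → ℝ≥0∞}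
    (hf : AEMeasurable f (Measure.pi μ)) :
    ∑ i, sqMarginal μ i f = ∫⁻ t, f t * lineSum μ f t ∂Measure.pi μ := by
  rw [lintegral_mul_lineSum μ hf hf]
  exact Finset.sum_congr rfl fun i _ => by
    simp only [sqMarginal, sq, lintegral_mul_lintegral_splitAt μ hf hf i]

theorem sum_sqMarginal_le_lintegral_mul_lineSum {f g h : (∀ j, X j) → ℝ≥0∞}
    (hf : AEMeasurable f (Measure.pi μ)) (hh : AEMeasurable h (Measure.pi μ))
    (hg : ∀ᵐ t ∂Measure.pi μ, g t ^ 2 ≤ h t * f t) :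
    ∑ i, sqMarginal μ i g ≤ ∫⁻ t, h t * lineSum μ f t ∂Measure.pi μ := by
  rw [lintegral_mul_lineSum μ hf hh]
  refine Finset.sum_le_sum fun i _ => ?_
  rw [← lintegral_mul_lintegral_splitAt μ hf hh i]
  have split := (measurePreserving_splitAt μ i).symm.quasiMeasurePreserving
  refine lintegral_mono_ae ?_
  filter_upwards [(hf.comp_quasiMeasurePreserving split).aestronglyMeasurable.prodMk_left,
    (hh.comp_quasiMeasurePreserving split).aestronglyMeasurable.prodMk_left,
    Measure.ae_ae_of_ae_prod (split.ae hg)] with y hfy hhy hgy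
  exact sq_lintegral_le_of_sq_le_mul hfy.aemeasurable hhy.aemeasurable hgy

theorem sum_sqMarginal_le_of_lineSum_le {f g : (∀ j, X j) → ℝ≥0∞} {c : ℝ≥0∞}
    (hf : AEMeasurable f (Measure.pi μ)) (hg : AEMeasurable g (Measure.pi μ))
    (hf_ne_top : ∀ᵐ t ∂Measure.pi μ, f t ≠ ∞)
    (hf_ne_zero : ∀ᵐ t ∂Measure.pi μ, g t ≠ 0 → f t ≠ 0)
    (hfc : ∀ᵐ t ∂Measure.pi μ, g t ≠ 0 → lineSum μ f t ≤ c * f t) :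
    ∑ i, sqMarginal μ i g ≤ c * ∫⁻ t, g t ^ 2 ∂Measure.pi μ := by
  have div_mul : ∀ᵐ t ∂Measure.pi μ, g t ^ 2 / f t * f t = g t ^ 2 := by
    filter_upwards [hf_ne_top, hf_ne_zero] with t htop h0
    by_cases hg0 : g t = 0
    · simp [hg0]
    · exact ENNReal.div_mul_cancel (h0 hg0) htop
  calc ∑ i, sqMarginal μ i g
      ≤ ∫⁻ t, g t ^ 2 / f t * lineSum μ f t ∂Measure.pi μ :=
        sum_sqMarginal_le_lintegral_mul_lineSum μ hf ((hg.pow_const 2).div hf)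
          (div_mul.mono fun t ht => ht.ge)
    _ ≤ ∫⁻ t, c * g t ^ 2 ∂Measure.pi μ := by
        refine lintegral_mono_ae ?_
        filter_upwards [div_mul, hfc] with t hdiv hc
        by_cases hg0 : g t = 0
        · simp [hg0]
        · calc g t ^ 2 / f t * lineSum μ f t ≤ g t ^ 2 / f t * (c * f t) := by
                gcongr
                exact hc hg0
            _ = c * g t ^ 2 := by rw [mul_left_comm, hdiv]
    _ = c * ∫⁻ t, g t ^ 2 ∂Measure.pi μ := lintegral_const_mul'' _ (hg.pow_const 2)

theorem ae_ofReal_integral_splitAt {F : (∀ j, X j) → ℝ} (hF : Integrable F (Measure.pi μ))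
    (hF0 : 0 ≤ F) (i : ι) :
    ∀ᵐ y ∂Measure.pi (fun j : {j // j ≠ i} => μ j),
      ENNReal.ofReal (∫ s, F ((splitAt i).symm (y, s)) ∂μ i) =
        ∫⁻ s, ‖F ((splitAt i).symm (y, s))‖ₑ ∂μ i := by
  have hF' := (measurePreserving_splitAt μ i).symm.integrable_comp_of_integrable hF
  filter_upwards [hF'.prod_right_ae] with y hy
  refine Eq.trans ?_ (ofReal_integral_norm_eq_lintegral_enorm hy)
  simp only [Real.norm_of_nonneg (hF0 _)]

theorem ae_ofReal_integral_update {F : (∀ j, X j) → ℝ} (hF : Integrable F (Measure.pi μ))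
    (hF0 : 0 ≤ F) (i : ι) :
    ∀ᵐ t ∂Measure.pi μ, ENNReal.ofReal (∫ s, F (Function.update t i s) ∂μ i) =
      ∫⁻ s, ‖F (Function.update t i s)‖ₑ ∂μ i := by
  simp only [← splitAt_symm_fst]
  exact (quasiMeasurePreserving_fst_splitAt μ i).ae (ae_ofReal_integral_splitAt μ hF hF0 i)

theorem ae_ofReal_sum_integral_update {F : (∀ j, X j) → ℝ} (hF : Integrable F (Measure.pi μ))
    (hF0 : 0 ≤ F) :
    ∀ᵐ t ∂Measure.pi μ, ENNReal.ofReal (∑ i, ∫ s, F (Function.update t i s) ∂μ i) =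
      lineSum μ (‖F ·‖ₑ) t := by
  filter_upwards [ae_all_iff.2 (ae_ofReal_integral_update μ hF hF0)] with t ht
  have integral_line_nonneg (i : ι) : 0 ≤ ∫ s, F (Function.update t i s) ∂μ i :=
    integral_nonneg fun s => hF0 (Function.update t i s)
  rw [ENNReal.ofReal_sum_of_nonneg fun i _ => integral_line_nonneg i]
  exact Finset.sum_congr rfl fun i _ => ht i

end SchurTest

section Simplex

theorem simplex_subset_Icc (k : ℕ) (c : ℝ) : simplex k c ⊆ Set.Icc 0 fun _ => c :=
  fun _ ht => ⟨ht.1, fun i =>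
    (Finset.single_le_sum (fun j _ => ht.1 j) (Finset.mem_univ i)).trans ht.2⟩

theorem volume_simplex_ne_top (k : ℕ) (c : ℝ) : volume (simplex k c) ≠ ∞ :=
  ((measure_mono (simplex_subset_Icc k c)).trans_lt isCompact_Icc.measure_lt_top).ne

theorem volume_simplex_ne_zero (k : ℕ) {c : ℝ} (hc : 0 < c) : volume (simplex k c) ≠ 0 := by
  let U : Set (Fin k → ℝ) := {t | ∑ i, t i < c} ∩ Set.univ.pi fun _ => Set.Ioi 0
  have hU : IsOpen U := (isOpen_lt (by fun_prop) continuous_const).inter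
    (isOpen_set_pi Set.finite_univ fun _ _ => isOpen_Ioi)
  have center_mem : (fun _ => c / (k + 1)) ∈ U := by
    refine ⟨?_, fun _ _ => Set.mem_Ioi.2 (by positivity)⟩
    calc ∑ _ : Fin k, c / (k + 1) = c * (k / (k + 1)) := by
          rw [Finset.sum_const, Finset.card_univ, Fintype.card_fin, nsmul_eq_mul, mul_div_left_comm]
      _ < c := mul_lt_of_lt_one_right hc ((div_lt_one (by positivity)).2 (lt_add_one _))
  have hUS : U ⊆ simplex k c := fun t ht => ⟨fun i => (ht.2 i trivial).le, ht.1.le⟩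
  exact ((hU.measure_pos volume ⟨_, center_mem⟩).trans_le (measure_mono hUS)).ne'

end Simplex

section Sieve

variable {k : ℕ} {S : Set (Fin k → ℝ)} {F G : (Fin k → ℝ) → ℝ}

theorem integral_Ioi_zero_splitAt (hF : Function.support F ⊆ Set.Ici 0) (i : Fin k)
    (y : {j : Fin k // j ≠ i} → ℝ) :
    ∫ s in Set.Ioi (0 : ℝ), F ((splitAt i).symm (y, s)) = ∫ s : ℝ, F ((splitAt i).symm (y, s)) := by
  refine integral_Ioi_zero_eq_integral fun s hs => Function.notMem_support.1 fun h => hs.not_ge ?_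
  exact (hF h i).trans_eq (splitAt_symm_apply_self (X := fun _ => ℝ) i y s)

theorem integral_Ioi_zero_update (hF : Function.support F ⊆ Set.Ici 0) (i : Fin k)
    (t : Fin k → ℝ) :
    ∫ s in Set.Ioi 0, F (Function.update t i s) = ∫ s, F (Function.update t i s) := by
  simpa only [splitAt_symm_fst] using integral_Ioi_zero_splitAt hF i (splitAt i t).1

theorem sieveI_nonneg (G : (Fin k → ℝ) → ℝ) : 0 ≤ sieveI G :=
  integral_nonneg fun t => sq_nonneg (G t)

theorem sieveI_eq_integral (hG : Function.support G ⊆ Set.Ici 0) : sieveI G = ∫ t, G t ^ 2 :=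
  setIntegral_eq_integral_of_forall_compl_eq_zero fun t ht => by
    rw [Function.notMem_support.1 fun h => ht (hG h), zero_pow two_ne_zero]

theorem ofReal_sieveI (hG2 : MemLp G 2 volume) (hG : Function.support G ⊆ Set.Ici 0) :
    ENNReal.ofReal (sieveI G) = ∫⁻ t, ‖G t‖ₑ ^ 2 := by
  rw [sieveI_eq_integral hG, ofReal_integral_eq_lintegral_ofReal hG2.integrable_sq
    (.of_forall fun t => sq_nonneg _)]
  simp only [← enorm_pow, Real.enorm_of_nonneg (sq_nonneg _)]

theorem sieveI_pos (hG2 : MemLp G 2 volume) (hG : Function.support G ⊆ Set.Ici 0)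
    (hG0 : ¬ G =ᵐ[volume] 0) : 0 < sieveI G := by
  refine (sieveI_nonneg G).lt_of_ne' fun h => hG0 ?_
  rw [sieveI_eq_integral hG] at h
  filter_upwards [(integral_eq_zero_iff_of_nonneg (fun t => sq_nonneg (G t))
    hG2.integrable_sq).1 h] with t ht
  exact sq_eq_zero_iff.1 ht

theorem sieveJ_eq_setIntegral_splitAt (i : Fin k) (G : (Fin k → ℝ) → ℝ) :
    sieveJ i G = ∫ y in {y : {j : Fin k // j ≠ i} → ℝ | ∀ j, 0 ≤ y j},
      (∫ s in Set.Ioi (0 : ℝ), G ((splitAt i).symm (y, s))) ^ 2 := by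
  have insert_eq (y : {j : Fin k // j ≠ i} → ℝ) (s : ℝ) :
      (fun j => if h : j = i then s else y ⟨j, h⟩) = (splitAt i).symm (y, s) := by
    funext j
    split_ifs with h
    · subst h
      exact (splitAt_symm_apply_self (X := fun _ => ℝ) j y s).symm
    · exact (splitAt_symm_apply_ne (X := fun _ => ℝ) y s ⟨j, h⟩).symm
  simp only [sieveJ, insert_eq]

theorem enorm_sieveJ_le_sqMarginal (i : Fin k) (G : (Fin k → ℝ) → ℝ) :
    ‖sieveJ i G‖ₑ ≤ sqMarginal (fun _ => volume) i (‖G ·‖ₑ) := by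
  rw [sieveJ_eq_setIntegral_splitAt]
  calc _ ≤ ∫⁻ y in {y : {j : Fin k // j ≠ i} → ℝ | ∀ j, 0 ≤ y j},
        ‖(∫ s in Set.Ioi (0 : ℝ), G ((splitAt i).symm (y, s))) ^ 2‖ₑ :=
        enorm_integral_le_lintegral_enorm _
    _ ≤ ∫⁻ y, (∫⁻ s, ‖G ((splitAt i).symm (y, s))‖ₑ) ^ 2 := by
        refine (setLIntegral_le_lintegral _ _).trans (lintegral_mono fun y => ?_)
        rw [enorm_pow]
        gcongr
        exact (enorm_integral_le_lintegral_enorm _).trans (setLIntegral_le_lintegral _ _)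

theorem sieveJ_eq_toReal_sqMarginal (hF1 : Integrable F volume) (hF0 : 0 ≤ F)
    (hF : Function.support F ⊆ Set.Ici 0) (i : Fin k) :
    sieveJ i F = (sqMarginal (fun _ => volume) i (‖F ·‖ₑ)).toReal := by
  have line_eq_zero {y : {j : Fin k // j ≠ i} → ℝ} (hy : ¬ ∀ j, 0 ≤ y j) (s : ℝ) :
      F ((splitAt i).symm (y, s)) = 0 :=
    Function.notMem_support.1 fun h => hy fun j =>
      (hF h j).trans_eq (splitAt_symm_apply_ne (X := fun _ => ℝ) y s j)
  have hmeas : AEStronglyMeasurable (fun y => ∫ s : ℝ, F ((splitAt i).symm (y, s))) volume :=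
    (hF1.1.comp_measurePreserving
      (measurePreserving_splitAt (fun _ => volume) i).symm).integral_prod_right'
  rw [sieveJ_eq_setIntegral_splitAt, setIntegral_eq_integral_of_forall_compl_eq_zero]
  · simp only [integral_Ioi_zero_splitAt hF]
    rw [integral_eq_lintegral_of_nonneg_ae (.of_forall fun y => sq_nonneg _) (hmeas.pow 2)]
    congr 1
    refine lintegral_congr_ae ?_
    filter_upwards [ae_ofReal_integral_splitAt (fun _ => volume) hF1 hF0 i] with y hy
    have line_nonneg : 0 ≤ ∫ s : ℝ, F ((splitAt i).symm (y, s)) :=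
      integral_nonneg fun s => hF0 ((splitAt i).symm (y, s))
    rw [ENNReal.ofReal_pow line_nonneg, hy]
  · intro y hy
    simp only [line_eq_zero hy, integral_zero, zero_pow two_ne_zero]

theorem sum_sieveJ_le_mul_sieveI {c : ℝ} (hc : 0 ≤ c) (hS : S ⊆ Set.Ici 0)
    (hF : AEStronglyMeasurable F volume) (hF_ne : ∀ t ∈ S, F t ≠ 0)
    (hFc : ∀ᵐ t, t ∈ S → lineSum (fun _ => volume) (‖F ·‖ₑ) t ≤ ENNReal.ofReal c * ‖F t‖ₑ)
    (hG2 : MemLp G 2 volume) (hG : Function.support G ⊆ S) :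
    ∑ i, sieveJ i G ≤ c * sieveI G := by
  have mem_of_enorm_ne_zero {t} (ht : ‖G t‖ₑ ≠ 0) : t ∈ S := hG (enorm_ne_zero.1 ht)
  rw [← ENNReal.ofReal_le_ofReal_iff (mul_nonneg hc (sieveI_nonneg _)), ENNReal.ofReal_mul hc,
    ofReal_sieveI hG2 (hG.trans hS)]
  calc ENNReal.ofReal (∑ i, sieveJ i G)
      ≤ ∑ i, ‖sieveJ i G‖ₑ := Real.ofReal_le_enorm _ |>.trans (enorm_sum_le _ _)
    _ ≤ ∑ i, sqMarginal (fun _ => volume) i (‖G ·‖ₑ) :=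
        Finset.sum_le_sum fun i _ => enorm_sieveJ_le_sqMarginal i G
    _ ≤ ENNReal.ofReal c * ∫⁻ t, ‖G t‖ₑ ^ 2 :=
        sum_sqMarginal_le_of_lineSum_le _ hF.enorm hG2.1.enorm
          (.of_forall fun t => enorm_ne_top)
          (.of_forall fun t ht => enorm_ne_zero.2 (hF_ne t (mem_of_enorm_ne_zero ht)))
          (hFc.mono fun t hFt ht => hFt (mem_of_enorm_ne_zero ht))

theorem sum_sieveJ_eq_mul_sieveI {c : ℝ} (hc : 0 ≤ c) (hS : S ⊆ Set.Ici 0)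
    (hF1 : Integrable F volume) (hF2 : MemLp F 2 volume) (hF0 : 0 ≤ F)
    (hF : Function.support F ⊆ S)
    (hFc : ∀ᵐ t, t ∈ S → lineSum (fun _ => volume) (‖F ·‖ₑ) t = ENNReal.ofReal c * ‖F t‖ₑ) :
    ∑ i, sieveJ i F = c * sieveI F := by
  have sum_eq : ∑ i, sqMarginal (fun _ => volume) i (‖F ·‖ₑ) =
      ENNReal.ofReal (c * sieveI F) := by
    rw [sum_sqMarginal_eq_lintegral_mul_lineSum _ hF1.1.enorm, ENNReal.ofReal_mul hc,
      ofReal_sieveI hF2 (hF.trans hS), ← lintegral_const_mul'' _ (hF1.1.enorm.pow_const 2)]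
    refine lintegral_congr_ae (hFc.mono fun t ht => ?_)
    by_cases hFt : F t = 0
    · simp [hFt]
    · simp only [ht (hF hFt), sq, mul_left_comm]
  have ne_top := ENNReal.sum_ne_top.1 (sum_eq.trans_ne ENNReal.ofReal_ne_top)
  rw [Finset.sum_congr rfl fun i _ => sieveJ_eq_toReal_sqMarginal hF1 hF0 (hF.trans hS) i,
    ← ENNReal.toReal_sum ne_top, sum_eq, ENNReal.toReal_ofReal (mul_nonneg hc (sieveI_nonneg _))]

/-- The set of quotients `(∑ᵢ J_i(G)) / I(G)` over the nonzero square-integrable `G` supported on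
`S`, so that `M_k` is its supremum when `S` is the simplex. -/
def sieveRatios (S : Set (Fin k → ℝ)) : Set ℝ :=
  {r | ∃ G : (Fin k → ℝ) → ℝ, MemLp G 2 volume ∧ (∀ t, t ∉ S → G t = 0) ∧ ¬ (G =ᵐ[volume] 0) ∧
    r = (∑ i, sieveJ i G) / sieveI G}

theorem eigenfunction_gives_Mk_general {lam : ℝ} (hS : S ⊆ Set.Ici 0) (hS0 : volume S ≠ 0)
    (hF1 : Integrable F volume) (hF2 : MemLp F 2 volume) (hFpos : ∀ t ∈ S, 0 < F t)
    (hFsupp : ∀ t, t ∉ S → F t = 0)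
    (heig : ∀ᵐ t, t ∈ S → lam * F t = ∑ i, ∫ s in Set.Ioi (0 : ℝ), F (Function.update t i s)) :
    IsGreatest (sieveRatios S) lam := by
  have hF : Function.support F ⊆ S := Function.support_subset_iff'.2 hFsupp
  have hF0 : 0 ≤ F := fun t => by
    by_cases ht : t ∈ S
    exacts [(hFpos t ht).le, (hFsupp t ht).ge]
  have mem_freq : ∃ᵐ t, t ∈ S := frequently_ae_mem_iff.2 hS0
  have hlam : 0 ≤ lam := by
    obtain ⟨t, ht, hFt⟩ := (mem_freq.and_eventually heig).exists
    refine nonneg_of_mul_nonneg_left ?_ (hFpos t ht)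
    exact (hFt ht).ge.trans' (Finset.sum_nonneg fun i _ => integral_nonneg fun s => hF0 _)
  have heig' : ∀ᵐ t, t ∈ S →
      lineSum (fun _ => volume) (‖F ·‖ₑ) t = ENNReal.ofReal lam * ‖F t‖ₑ := by
    filter_upwards [heig, ae_ofReal_sum_integral_update (fun _ => volume) hF1 hF0]
      with t ht hsum htS
    rw [← hsum, Real.enorm_of_nonneg (hF0 t), ← ENNReal.ofReal_mul hlam, ht htS]
    simp only [integral_Ioi_zero_update (hF.trans hS)]
  constructor
  · have hF_ne : ¬ F =ᵐ[volume] 0 := fun h =>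
      let ⟨t, ht, hFt⟩ := (mem_freq.and_eventually h).exists
      (hFpos t ht).ne' hFt
    refine ⟨F, hF2, hFsupp, hF_ne, ?_⟩
    rw [sum_sieveJ_eq_mul_sieveI hlam hS hF1 hF2 hF0 hF heig',
      mul_div_cancel_right₀ _ (sieveI_pos hF2 (hF.trans hS) hF_ne).ne']
  · rintro r ⟨G, hG2, hGsupp, hG_ne, rfl⟩
    have hG : Function.support G ⊆ S := Function.support_subset_iff'.2 hGsupp
    exact (div_le_iff₀ (sieveI_pos hG2 (hG.trans hS) hG_ne)).2
      (sum_sieveJ_le_mul_sieveI hlam hS hF1.1 (fun t ht => (hFpos t ht).ne')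
        (heig'.mono fun t ht htS => (ht htS).le) hG2 hG)

end Sieve

/-- **Polymath8b, Corollary 6.2 (eigenfunction criterion)**: if there is a positive
square-integrable `F` on `R_k` (extended by zero) and `λ > 0` satisfying the
eigenfunction equation `λ F(t) = ∑ᵢ ∫_0^∞ F(t₁,…,tᵢ',…,t_k) dtᵢ'` on `R_k`,
then `λ = M_k`. -/
theorem eigenfunction_gives_Mk (k : ℕ) (hk : 2 ≤ k) (F : (Fin k → ℝ) → ℝ) (lam : ℝ)
    (hlam : 0 < lam)
    (hF2 : MemLp F 2 volume)
    (hFpos : ∀ t ∈ simplex k 1, 0 < F t)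
    (hFsupp : ∀ t : Fin k → ℝ, t ∉ simplex k 1 → F t = 0)
    (heig : ∀ t ∈ simplex k 1,
      lam * F t = ∑ i, ∫ s in Set.Ioi (0 : ℝ), F (Function.update t i s)) :
    lam = Mquant k := by
  have hF : Function.support F ⊆ simplex k 1 := Function.support_subset_iff'.2 hFsupp
  have hF1 := integrable_of_memLp_of_support_subset one_le_two hF2 hF (volume_simplex_ne_top k 1)
  exact (eigenfunction_gives_Mk_general ((simplex_subset_Icc k 1).trans Set.Icc_subset_Ici_self)
    (volume_simplex_ne_zero k one_pos) hF1 hF2 hFpos hFsupp (.of_forall heig)).csSup_eq.symm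
end

section
/- Let w be the unique positive real number satisfying w·e^w = e^{−1}. Then M_2 = 1/(1 − w) (numerically, M_2 = 1.38593…). -/
open MeasureTheory

/-!
Let `E` be positive on `R_k` with `∑ᵢ ∫ E dt_i = L E` there. Cauchy–Schwarz with weight `E`,
`(∫ F dt_i)² ≤ (∫ E dt_i) · ∫ F²/E dt_i`, integrated over the other variables and summed over `i`,
gives `∑ᵢ J_i(F) ≤ L I(F)`, with equality for `F = E`; hence `M_k = L`. For `k = 2` and
`E = f(t₁) + f(t₂)` the equation for `E` becomes `(L - 1 + x) f(x) = ∫_0^{1-x} f`, that is, a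
differential equation together with the boundary condition `f(1) = 0`. The differential equation
has an explicit solution for every `L > 1`, and the boundary condition singles out `L = 1/(1 - w)`.
-/

section WeightedCauchySchwarz

variable {α : Type*} [MeasurableSpace α] {μ : Measure α} {f e : α → ℝ}

lemma sq_integral_le_integral_mul_integral_sq_div (he_nonneg : ∀ x, 0 ≤ e x)
    (hfe : ∀ x, e x = 0 → f x = 0) (hf : Integrable f μ) (he : Integrable e μ)
    (hfe_int : Integrable (fun x => f x ^ 2 / e x) μ) :
    (∫ x, f x ∂μ) ^ 2 ≤ (∫ x, e x ∂μ) * ∫ x, f x ^ 2 / e x ∂μ := by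
  have hquadratic (t : ℝ) : 0 ≤ (∫ x, e x ∂μ) * (t * t) + (-2 * ∫ x, f x ∂μ) * t +
      ∫ x, f x ^ 2 / e x ∂μ := by
    have hpointwise (x : α) : 0 ≤ e x * (t * t) + -2 * f x * t + f x ^ 2 / e x := by
      rcases (he_nonneg x).eq_or_lt' with h0 | hpos
      · simp [h0, hfe x h0]
      · calc 0 ≤ e x * (t - f x / e x) ^ 2 := by positivity
          _ = _ := by field_simp; ring
    calc 0 ≤ ∫ x, e x * (t * t) + -2 * f x * t + f x ^ 2 / e x ∂μ := integral_nonneg hpointwise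
      _ = _ := by
        have he' := he.mul_const (t * t)
        have hf' := (hf.const_mul (-2)).mul_const t
        rw [integral_add (he'.fun_add hf') hfe_int, integral_add he' hf', integral_mul_const,
          integral_mul_const, integral_const_mul]
  have hdiscrim := discrim_le_zero hquadratic
  rw [discrim] at hdiscrim
  linarith

lemma sq_integral_le_integral_integral_mul_sq_div (he_nonneg : ∀ x, 0 ≤ e x)
    (hfe : ∀ x, e x = 0 → f x = 0) (hf : Integrable f μ) (he : Integrable e μ)
    (hfe_int : Integrable (fun x => (∫ z, e z ∂μ) * (f x ^ 2 / e x)) μ) :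
    (∫ x, f x ∂μ) ^ 2 ≤ ∫ x, (∫ z, e z ∂μ) * (f x ^ 2 / e x) ∂μ := by
  rw [integral_const_mul]
  refine sq_integral_le_integral_mul_integral_sq_div he_nonneg hfe hf he ?_
  by_cases h0 : ∫ z, e z ∂μ = 0
  · have he_zero : e =ᵐ[μ] 0 := (integral_eq_zero_iff_of_nonneg he_nonneg he).1 h0
    refine (integrable_zero α ℝ μ).congr ?_
    filter_upwards [he_zero] with x hx
    simp [hfe x hx]
  · exact (integrable_const_mul_iff (isUnit_iff_ne_zero.2 h0) _).1 hfe_int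

end WeightedCauchySchwarz

section SplitCoord

variable {ι : Type*} [DecidableEq ι]

/-- The splitting `ℝ^ι ≃ ℝ × ℝ^(ι ∖ {i})` of the `i`-th coordinate `t_i` from the other ones, along
which the iterated integral `J_i` is compared with integrals over `ℝ^ι`. -/
noncomputable def splitCoord (i : ι) : (ι → ℝ) ≃ᵐ ℝ × ({j // j ≠ i} → ℝ) :=
  (MeasurableEquiv.piEquivPiSubtypeProd (fun _ => ℝ) (· = i)).trans
    ((MeasurableEquiv.funUnique {j // j = i} ℝ).prodCongr (MeasurableEquiv.refl _))

lemma splitCoord_symm_apply (i : ι) (s : ℝ) (y : {j // j ≠ i} → ℝ) :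
    (splitCoord i).symm (s, y) = fun j => if h : j = i then s else y ⟨j, h⟩ := rfl

lemma update_splitCoord_symm (i : ι) (s s' : ℝ) (y : {j // j ≠ i} → ℝ) :
    Function.update ((splitCoord i).symm (s, y)) i s' = (splitCoord i).symm (s', y) := by
  ext j
  by_cases h : j = i
  · subst h
    simp [splitCoord_symm_apply]
  · simp [splitCoord_symm_apply, h]

/-- The marginal `t ↦ ∫ F(t) dt_i`, regarded as a function on the whole of `ℝ^ι` which does not
depend on `t_i`. -/
noncomputable def marginal (i : ι) (F : (ι → ℝ) → ℝ) (t : ι → ℝ) : ℝ :=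
  ∫ s, F (Function.update t i s)

lemma marginal_splitCoord_symm (i : ι) (F : (ι → ℝ) → ℝ) (s : ℝ) (y : {j // j ≠ i} → ℝ) :
    marginal i F ((splitCoord i).symm (s, y)) = ∫ s', F ((splitCoord i).symm (s', y)) := by
  simp only [marginal, update_splitCoord_symm]

lemma marginal_nonneg {F : (ι → ℝ) → ℝ} (hF : ∀ t, 0 ≤ F t) (i : ι) (t : ι → ℝ) :
    0 ≤ marginal i F t :=
  integral_nonneg fun _ => hF _

variable [Fintype ι]

lemma measurePreserving_splitCoord (i : ι) : MeasurePreserving (splitCoord i) := by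
  -- `Fintype.subtypeEq`, found by default, is not the instance of `piEquivPiSubtypeProd`.
  have hunique :=
    @volume_preserving_piUnique {j // j = i} (Subtype.fintype _) (fun _ => ℝ) _ _
  exact (hunique.prod (.id volume)).comp
    (volume_preserving_piEquivPiSubtypeProd (fun _ => ℝ) (· = i))

lemma integrable_comp_splitCoord_symm {G : (ι → ℝ) → ℝ} (hG : Integrable G) (i : ι) :
    Integrable (fun p => G ((splitCoord i).symm p)) :=
  (measurePreserving_splitCoord i).symm.integrable_comp_of_integrable hG

lemma ae_integrable_splitCoord_symm {G : (ι → ℝ) → ℝ} (hG : Integrable G) (i : ι) :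
    ∀ᵐ y, Integrable fun s => G ((splitCoord i).symm (s, y)) :=
  (integrable_comp_splitCoord_symm hG i).prod_left_ae

lemma integral_eq_integral_integral_splitCoord_symm {G : (ι → ℝ) → ℝ} (hG : Integrable G)
    (i : ι) : ∫ t, G t = ∫ y, ∫ s, G ((splitCoord i).symm (s, y)) := by
  rw [← (measurePreserving_splitCoord i).symm.integral_comp
    (splitCoord i).symm.measurableEmbedding]
  exact integral_prod_symm _ (integrable_comp_splitCoord_symm hG i)

lemma aestronglyMeasurable_marginal {F : (ι → ℝ) → ℝ} (hF : Integrable F) (i : ι) :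
    AEStronglyMeasurable (marginal i F) := by
  have hslice : AEStronglyMeasurable fun y => ∫ s, F ((splitCoord i).symm (s, y)) :=
    (integrable_comp_splitCoord_symm hF i).integral_prod_right.aestronglyMeasurable
  refine (hslice.comp_snd.comp_measurePreserving (measurePreserving_splitCoord i)).congr
    (.of_forall fun t => ?_)
  obtain ⟨p, rfl⟩ := (splitCoord i).symm.surjective t
  simp only [Function.comp_apply, MeasurableEquiv.apply_symm_apply]
  exact (marginal_splitCoord_symm i F p.1 p.2).symm

lemma integrable_marginal_mul_sq_div_of_marginal_le {E f : (ι → ℝ) → ℝ} {L : ℝ} {i : ι}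
    (hE_nonneg : ∀ t, 0 ≤ E t) (hE : Integrable E) (hf : MemLp f 2)
    (hfE : ∀ t, E t = 0 → f t = 0) (hmarginal : ∀ t, E t ≠ 0 → marginal i E t ≤ L * E t) :
    Integrable fun t => marginal i E t * (f t ^ 2 / E t) := by
  refine (hf.integrable_sq.const_mul L).mono' ((aestronglyMeasurable_marginal hE i).mul
    (hf.integrable_sq.aestronglyMeasurable.div₀ hE.aestronglyMeasurable))
    (.of_forall fun t => ?_)
  have hnonneg := marginal_nonneg hE_nonneg i t
  rcases (hE_nonneg t).eq_or_lt' with h0 | hpos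
  · simp [h0, hfE t h0]
  · rw [Real.norm_of_nonneg (by positivity), mul_div_left_comm, mul_comm]
    gcongr
    exact (div_le_iff₀ hpos).2 (hmarginal t hpos.ne')

end SplitCoord

section Simplex

variable {k : ℕ} {c : ℝ} {t : Fin k → ℝ}

lemma le_of_mem_simplex (ht : t ∈ simplex k c) (i : Fin k) : t i ≤ c :=
  (Finset.single_le_sum (fun j _ => ht.1 j) (Finset.mem_univ i)).trans ht.2

lemma isClosed_simplex (k : ℕ) (c : ℝ) : IsClosed (simplex k c) := by
  have hsum : IsClosed {t : Fin k → ℝ | ∑ i, t i ≤ c} :=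
    isClosed_le (by fun_prop) continuous_const
  exact (isClosed_Ici (a := (0 : Fin k → ℝ))).inter hsum

lemma isCompact_simplex (k : ℕ) (c : ℝ) : IsCompact (simplex k c) :=
  (isCompact_univ_pi fun _ : Fin k => isCompact_Icc (a := 0) (b := c)).of_isClosed_subset
    (isClosed_simplex k c) fun _ ht i _ => ⟨ht.1 i, le_of_mem_simplex ht i⟩

lemma volume_simplex_pos (hc : 0 < c) : 0 < volume (simplex k c) := by
  let U : Set (Fin k → ℝ) := Set.univ.pi (fun _ => Set.Ioi 0) ∩ {t | ∑ i, t i < c}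
  have hU_open : IsOpen U :=
    (isOpen_set_pi Set.finite_univ fun _ _ => isOpen_Ioi).inter
      (isOpen_lt (by fun_prop) continuous_const)
  have hU_nonempty : U.Nonempty := by
    refine ⟨fun _ => c / (k + 1), fun _ _ => Set.mem_Ioi.2 (by positivity), ?_⟩
    change ∑ _ : Fin k, c / (k + 1) < c
    rw [Finset.sum_const, Finset.card_fin, nsmul_eq_mul, mul_div_assoc',
      div_lt_iff₀ (by positivity)]
    linarith
  have hU_subset : U ⊆ simplex k c := fun t ht => ⟨fun i => (ht.1 i trivial).le, ht.2.le⟩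
  exact (hU_open.measure_pos volume hU_nonempty).trans_le (measure_mono hU_subset)

lemma update_mem_simplex_iff (ht : t ∈ simplex k c) (i : Fin k) (s : ℝ) :
    Function.update t i s ∈ simplex k c ↔
      s ∈ Set.Icc 0 (c - ∑ j ∈ Finset.univ \ {i}, t j) := by
  have hnonneg : (∀ j, 0 ≤ Function.update t i s j) ↔ 0 ≤ s :=
    ⟨fun h => by simpa using h i, fun hs j => by
      rcases eq_or_ne j i with rfl | hj
      · simpa using hs
      · simpa [hj] using ht.1 j⟩
  rw [Set.mem_Icc, le_sub_iff_add_le, ← Finset.sum_update_of_mem (Finset.mem_univ i)]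
  exact and_congr_left' hnonneg

lemma integrable_of_memLp_of_forall_notMem_simplex {F : (Fin k → ℝ) → ℝ} {p : ENNReal}
    (hp : 1 ≤ p) (hF : MemLp F p) (hsupp : ∀ t, t ∉ simplex k c → F t = 0) : Integrable F := by
  have : IsFiniteMeasure (volume.restrict (simplex k c)) :=
    isFiniteMeasure_restrict.2 (isCompact_simplex k c).measure_ne_top
  have hint : IntegrableOn F (simplex k c) := (hF.restrict _).integrable hp
  exact hint.integrable_of_forall_notMem_eq_zero hsupp

lemma memLp_indicator_simplex {F : (Fin k → ℝ) → ℝ} (hF : ContinuousOn F (simplex k c))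
    (p : ENNReal) : MemLp ((simplex k c).indicator F) p := by
  have : IsFiniteMeasure (volume.restrict (simplex k c)) :=
    isFiniteMeasure_restrict.2 (isCompact_simplex k c).measure_ne_top
  have hmeas := (isClosed_simplex k c).measurableSet
  obtain ⟨C, hC⟩ := (isCompact_simplex k c).exists_bound_of_continuousOn hF
  rw [memLp_indicator_iff_restrict hmeas]
  exact .of_bound (hF.aestronglyMeasurable hmeas) C
    ((ae_restrict_iff' hmeas).2 (.of_forall hC))

lemma marginal_indicator_simplex_sum (f : ℝ → ℝ) (ht : t ∈ simplex k c) (i : Fin k)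
    (hf : IntervalIntegrable f volume 0 (c - ∑ j ∈ Finset.univ \ {i}, t j)) :
    marginal i ((simplex k c).indicator fun t => ∑ j, f (t j)) t =
      (∫ s in 0..(c - ∑ j ∈ Finset.univ \ {i}, t j), f s) +
        (c - ∑ j ∈ Finset.univ \ {i}, t j) * ∑ j ∈ Finset.univ \ {i}, f (t j) := by
  set r := c - ∑ j ∈ Finset.univ \ {i}, t j with hr
  have hr_nonneg : 0 ≤ r := by
    have hti : t i ∈ Set.Icc 0 r := by
      rw [hr, ← update_mem_simplex_iff ht i, Function.update_eq_self]
      exact ht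
    exact hti.1.trans hti.2
  have hslice : (fun s => (simplex k c).indicator (fun t => ∑ j, f (t j)) (Function.update t i s)) =
      (Set.Icc 0 r).indicator fun s => f s + ∑ j ∈ Finset.univ \ {i}, f (t j) := by
    classical
    ext s
    have hsum : ∑ j, f (Function.update t i s j) = f s + ∑ j ∈ Finset.univ \ {i}, f (t j) := by
      simp_rw [Function.apply_update (fun _ => f) t i s]
      exact Finset.sum_update_of_mem (Finset.mem_univ i) _ _
    simp only [Set.indicator_apply, update_mem_simplex_iff ht i s, hsum, ← hr]
  rw [marginal, hslice, integral_indicator measurableSet_Icc, integral_Icc_eq_integral_Ioc,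
    ← intervalIntegral.integral_of_le hr_nonneg, intervalIntegral.integral_add hf (by simp),
    intervalIntegral.integral_const, sub_zero, smul_eq_mul]

end Simplex

section SieveFunctionals

variable {k : ℕ} {F : (Fin k → ℝ) → ℝ}

lemma sieveI_eq_integral_s11 (hF : ∀ t, F t ≠ 0 → ∀ i, 0 ≤ t i) : sieveI F = ∫ t, F t ^ 2 :=
  setIntegral_eq_integral_of_forall_compl_eq_zero fun t ht =>
    pow_eq_zero_iff two_ne_zero |>.2 (not_imp_comm.1 (hF t) ht)

lemma sieveJ_eq_integral (hF : ∀ t, F t ≠ 0 → ∀ i, 0 ≤ t i) (i : Fin k) :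
    sieveJ i F = ∫ y, (∫ s, F ((splitCoord i).symm (s, y))) ^ 2 := by
  have hslice (y : {j // j ≠ i} → ℝ) : ∫ s in Set.Ioi 0, F ((splitCoord i).symm (s, y)) =
      ∫ s, F ((splitCoord i).symm (s, y)) := by
    rw [← integral_Ici_eq_integral_Ioi]
    refine setIntegral_eq_integral_of_forall_compl_eq_zero fun s hs => ?_
    by_contra hne
    exact hs (by simpa [splitCoord_symm_apply] using hF _ hne i)
  simp only [sieveJ, ← splitCoord_symm_apply, hslice]
  refine setIntegral_eq_integral_of_forall_compl_eq_zero fun y hy => ?_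
  have hzero (s : ℝ) : F ((splitCoord i).symm (s, y)) = 0 := by
    by_contra hne
    exact hy fun j => by simpa [splitCoord_symm_apply, j.2] using hF _ hne j
  simp [hzero]

lemma sieveJ_le_integral_marginal_mul_sq_div {E : (Fin k → ℝ) → ℝ}
    (hF : ∀ t, F t ≠ 0 → ∀ i, 0 ≤ t i) (hE_nonneg : ∀ t, 0 ≤ E t) (hE : Integrable E)
    (hFE : ∀ t, E t = 0 → F t = 0) (hF_int : Integrable F) (i : Fin k)
    (hFE_int : Integrable fun t => marginal i E t * (F t ^ 2 / E t)) :
    sieveJ i F ≤ ∫ t, marginal i E t * (F t ^ 2 / E t) := by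
  rw [sieveJ_eq_integral hF, integral_eq_integral_integral_splitCoord_symm hFE_int i]
  refine integral_mono_of_nonneg (.of_forall fun _ => sq_nonneg _)
    (integrable_comp_splitCoord_symm hFE_int i).integral_prod_right ?_
  filter_upwards [ae_integrable_splitCoord_symm hF_int i, ae_integrable_splitCoord_symm hE i,
    ae_integrable_splitCoord_symm hFE_int i] with y hFy hEy hFEy
  simp only [marginal_splitCoord_symm] at hFEy ⊢
  exact sq_integral_le_integral_integral_mul_sq_div (fun _ => hE_nonneg _) (fun _ => hFE _)
    hFy hEy hFEy

lemma sieveJ_eq_integral_marginal_mul_self (hF : ∀ t, F t ≠ 0 → ∀ i, 0 ≤ t i) (i : Fin k)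
    (hF_int : Integrable fun t => marginal i F t * F t) :
    sieveJ i F = ∫ t, marginal i F t * F t := by
  rw [sieveJ_eq_integral hF, integral_eq_integral_integral_splitCoord_symm hF_int i]
  simp only [marginal_splitCoord_symm, integral_const_mul, sq]

end SieveFunctionals

/-- A positive eigenfunction of the sieve problem: a square-integrable `E`, supported on the simplex
`R_k` and positive there, with `∑ᵢ ∫ E dt_i = L E` on `R_k`. This is the Euler–Lagrange equation
of `(∑ᵢ J_i)/I`, and positivity forces `L` to be the maximum `M_k` of this quotient. -/
structure IsPositiveEigenfunction {k : ℕ} (E : (Fin k → ℝ) → ℝ) (L : ℝ) : Prop where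
  memLp : MemLp E 2
  eq_zero_of_notMem : ∀ t, t ∉ simplex k 1 → E t = 0
  pos_of_mem : ∀ t ∈ simplex k 1, 0 < E t
  sum_marginal : ∀ t ∈ simplex k 1, ∑ i, marginal i E t = L * E t

namespace IsPositiveEigenfunction

variable {k : ℕ} {E F : (Fin k → ℝ) → ℝ} {L : ℝ}

lemma nonneg (hE : IsPositiveEigenfunction E L) (t : Fin k → ℝ) : 0 ≤ E t := by
  by_cases ht : t ∈ simplex k 1
  · exact (hE.pos_of_mem t ht).le
  · exact (hE.eq_zero_of_notMem t ht).ge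

lemma integrable (hE : IsPositiveEigenfunction E L) : Integrable E :=
  integrable_of_memLp_of_forall_notMem_simplex one_le_two hE.memLp hE.eq_zero_of_notMem

lemma notMem_of_eq_zero (hE : IsPositiveEigenfunction E L) {t : Fin k → ℝ} (ht : E t = 0) :
    t ∉ simplex k 1 := fun hmem =>
  (hE.pos_of_mem t hmem).ne' ht

lemma mem_of_ne_zero (hE : IsPositiveEigenfunction E L) {t : Fin k → ℝ} (ht : E t ≠ 0) :
    t ∈ simplex k 1 :=
  not_imp_comm.1 (hE.eq_zero_of_notMem t) ht

lemma eigenvalue_nonneg (hE : IsPositiveEigenfunction E L) : 0 ≤ L := by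
  have hzero : (0 : Fin k → ℝ) ∈ simplex k 1 := by simp [simplex]
  refine nonneg_of_mul_nonneg_left ?_ (hE.pos_of_mem 0 hzero)
  rw [← hE.sum_marginal 0 hzero]
  exact Finset.sum_nonneg fun i _ => marginal_nonneg hE.nonneg i 0

lemma not_ae_eq_zero (hE : IsPositiveEigenfunction E L) : ¬ E =ᵐ[volume] 0 := fun h =>
  (volume_simplex_pos one_pos).ne' <|
    measure_mono_null (fun t ht => (hE.pos_of_mem t ht).ne') (ae_iff.1 h)

lemma integral_sq_pos (hE : IsPositiveEigenfunction E L) : 0 < ∫ t, E t ^ 2 := by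
  refine (integral_nonneg fun t => sq_nonneg (E t)).lt_of_ne' fun h => hE.not_ae_eq_zero ?_
  filter_upwards [(integral_eq_zero_iff_of_nonneg (fun _ => sq_nonneg _)
    hE.memLp.integrable_sq).1 h] with t ht
  simpa using ht

lemma marginal_le (hE : IsPositiveEigenfunction E L) (i : Fin k) {t : Fin k → ℝ}
    (ht : t ∈ simplex k 1) : marginal i E t ≤ L * E t := by
  rw [← hE.sum_marginal t ht]
  exact Finset.single_le_sum (f := fun j => marginal j E t)
    (fun j _ => marginal_nonneg hE.nonneg j t) (Finset.mem_univ i)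

lemma integrable_marginal_mul_sq_div (hE : IsPositiveEigenfunction E L) (hF : MemLp F 2)
    (hsupp : ∀ t, t ∉ simplex k 1 → F t = 0) (i : Fin k) :
    Integrable fun t => marginal i E t * (F t ^ 2 / E t) :=
  integrable_marginal_mul_sq_div_of_marginal_le hE.nonneg hE.integrable hF
    (fun t ht => hsupp t (hE.notMem_of_eq_zero ht))
    fun _ ht => hE.marginal_le i (hE.mem_of_ne_zero ht)

lemma sum_integral_marginal_mul_sq_div (hE : IsPositiveEigenfunction E L) (hF : MemLp F 2)
    (hsupp : ∀ t, t ∉ simplex k 1 → F t = 0) :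
    ∑ i, ∫ t, marginal i E t * (F t ^ 2 / E t) = L * ∫ t, F t ^ 2 := by
  rw [← integral_finsetSum _ fun i _ => hE.integrable_marginal_mul_sq_div hF hsupp i,
    ← integral_const_mul]
  congr 1 with t
  rw [← Finset.sum_mul]
  by_cases ht : t ∈ simplex k 1
  · rw [hE.sum_marginal t ht, mul_assoc, mul_div_cancel₀ _ (hE.pos_of_mem t ht).ne']
  · simp [hsupp t ht]

lemma sum_sieveJ_le (hE : IsPositiveEigenfunction E L) (hF : MemLp F 2)
    (hsupp : ∀ t, t ∉ simplex k 1 → F t = 0) : ∑ i, sieveJ i F ≤ L * ∫ t, F t ^ 2 := by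
  rw [← hE.sum_integral_marginal_mul_sq_div hF hsupp]
  exact Finset.sum_le_sum fun i _ => sieveJ_le_integral_marginal_mul_sq_div
    (fun t ht => (not_imp_comm.1 (hsupp t) ht).1) hE.nonneg hE.integrable
    (fun t ht => hsupp t (hE.notMem_of_eq_zero ht))
    (integrable_of_memLp_of_forall_notMem_simplex one_le_two hF hsupp) i
    (hE.integrable_marginal_mul_sq_div hF hsupp i)

lemma sum_sieveJ_self (hE : IsPositiveEigenfunction E L) :
    ∑ i, sieveJ i E = L * ∫ t, E t ^ 2 := by
  have hint (i : Fin k) := hE.integrable_marginal_mul_sq_div hE.memLp hE.eq_zero_of_notMem i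
  have hsum := hE.sum_integral_marginal_mul_sq_div hE.memLp hE.eq_zero_of_notMem
  simp only [sq, mul_self_div_self] at hint
  rw [← hsum]
  simp only [sq (E _), mul_self_div_self]
  exact Finset.sum_congr rfl fun i _ => sieveJ_eq_integral_marginal_mul_self
    (fun t ht => (hE.mem_of_ne_zero ht).1) i (hint i)

theorem Mquant_eq (hE : IsPositiveEigenfunction E L) : Mquant k = L := by
  refine IsGreatest.csSup_eq ⟨⟨E, hE.memLp, hE.eq_zero_of_notMem, hE.not_ae_eq_zero, ?_⟩, ?_⟩
  · rw [hE.sum_sieveJ_self, sieveI_eq_integral_s11 fun t ht => (hE.mem_of_ne_zero ht).1,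
      mul_div_cancel_right₀ _ hE.integral_sq_pos.ne']
  · rintro r ⟨F, hF, hsupp, -, rfl⟩
    rw [sieveI_eq_integral_s11 fun t ht => (not_imp_comm.1 (hsupp t) ht).1]
    exact div_le_of_le_mul₀ (integral_nonneg fun _ => sq_nonneg _) hE.eigenvalue_nonneg
      (hE.sum_sieveJ_le hF hsupp)

end IsPositiveEigenfunction

section ExtremalProfile

/-- The function `f(x) = 1/(L - 1 + x) + log((L - x)/(L - 1 + x))/(2L - 1)`, for which
`f(t₁) + f(t₂)` is an eigenfunction on `R_2`. Up to a factor it is the solution of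
`((L - 1 + x) f(x))' = -f(1 - x)`, which is the eigenfunction equation differentiated. -/
noncomputable def extremalProfile (L x : ℝ) : ℝ :=
  1 / (L - 1 + x) + (Real.log (L - x) - Real.log (L - 1 + x)) / (2 * L - 1)

variable {L x : ℝ}

lemma hasDerivAt_extremalProfile (hx : x ∈ Set.Ioo (1 - L) L) :
    HasDerivAt (extremalProfile L) (-1 / (L - 1 + x) ^ 2 - 1 / ((L - x) * (L - 1 + x))) x := by
  obtain ⟨hx₁, hx₂⟩ := hx
  have hadd : L - 1 + x ≠ 0 := by linarith
  have hsub : L - x ≠ 0 := by linarith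
  have hL : 2 * L - 1 ≠ 0 := by linarith
  have hderiv_add : HasDerivAt (fun x => L - 1 + x) 1 x := (hasDerivAt_id x).const_add _
  have hderiv_sub : HasDerivAt (fun x => L - x) (-1) x := (hasDerivAt_id x).const_sub _
  have hderiv_inv := (hasDerivAt_const x 1).fun_div hderiv_add hadd
  have hderiv_log := ((hderiv_sub.log hsub).fun_sub (hderiv_add.log hadd)).div_const (2 * L - 1)
  have hpartial_fractions :
      (-1 / (L - x) - 1 / (L - 1 + x)) / (2 * L - 1) = -(1 / ((L - x) * (L - 1 + x))) := by
    rw [div_eq_iff hL]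
    field_simp
    ring
  refine (hderiv_inv.fun_add hderiv_log).congr_deriv ?_
  rw [hpartial_fractions, zero_mul, mul_one, zero_sub, ← sub_eq_add_neg]

lemma continuousOn_extremalProfile : ContinuousOn (extremalProfile L) (Set.Ioo (1 - L) L) :=
  fun _ hx => (hasDerivAt_extremalProfile hx).continuousAt.continuousWithinAt

lemma strictAntiOn_extremalProfile : StrictAntiOn (extremalProfile L) (Set.Ioo (1 - L) L) := by
  refine strictAntiOn_of_deriv_neg (convex_Ioo _ _) continuousOn_extremalProfile fun x hx => ?_
  rw [interior_Ioo] at hx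
  rw [(hasDerivAt_extremalProfile hx).deriv]
  have hadd : 0 < L - 1 + x := by linarith [hx.1]
  have hsub : 0 < L - x := by linarith [hx.2]
  have hsq : 0 < 1 / (L - 1 + x) ^ 2 := by positivity
  have hmul : 0 < 1 / ((L - x) * (L - 1 + x)) := by positivity
  rw [neg_div]
  linarith

lemma hasDerivAt_mul_extremalProfile_one_sub (hx : x ∈ Set.Ioo (1 - L) L) :
    HasDerivAt (fun u => (L - u) * extremalProfile L (1 - u)) (extremalProfile L x) x := by
  have hreflect : 1 - x ∈ Set.Ioo (1 - L) L := ⟨by linarith [hx.2], by linarith [hx.1]⟩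
  have hderiv := ((hasDerivAt_id x).const_sub L).fun_mul
    ((hasDerivAt_extremalProfile hreflect).comp_const_sub 1 x)
  refine hderiv.congr_deriv ?_
  have hadd : L - 1 + x ≠ 0 := by linarith [hx.1]
  have hsub : L - x ≠ 0 := by linarith [hx.2]
  have hadd_reflect : L - 1 + (1 - x) = L - x := by ring
  have hsub_reflect : L - (1 - x) = L - 1 + x := by ring
  simp only [extremalProfile, hadd_reflect, hsub_reflect, id]
  field_simp
  ring

lemma integral_extremalProfile {a b : ℝ} (ha : a ∈ Set.Ioo (1 - L) L)
    (hb : b ∈ Set.Ioo (1 - L) L) :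
    ∫ s in a..b, extremalProfile L s =
      (L - b) * extremalProfile L (1 - b) - (L - a) * extremalProfile L (1 - a) := by
  have hsub : Set.uIcc a b ⊆ Set.Ioo (1 - L) L := Set.ordConnected_Ioo.uIcc_subset ha hb
  exact intervalIntegral.integral_eq_sub_of_hasDerivAt
    (fun x hx => hasDerivAt_mul_extremalProfile_one_sub (hsub hx))
    (continuousOn_extremalProfile.mono hsub).intervalIntegrable

lemma Icc_zero_one_subset_Ioo (hL : 1 < L) : Set.Icc 0 1 ⊆ Set.Ioo (1 - L) L :=
  Set.Icc_subset_Ioo (by linarith) hL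

lemma extremalProfile_pos (hL : 1 < L) (hL_one : extremalProfile L 1 = 0)
    (hx : x ∈ Set.Ico 0 1) : 0 < extremalProfile L x := by
  rw [← hL_one]
  exact strictAntiOn_extremalProfile (Icc_zero_one_subset_Ioo hL ⟨hx.1, hx.2.le⟩)
    (Icc_zero_one_subset_Ioo hL ⟨zero_le_one, le_rfl⟩) hx.2

lemma extremalProfile_nonneg (hL : 1 < L) (hL_one : extremalProfile L 1 = 0)
    (hx : x ∈ Set.Icc 0 1) : 0 ≤ extremalProfile L x := by
  rcases hx.2.eq_or_lt with rfl | hlt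
  · exact hL_one.ge
  · exact (extremalProfile_pos hL hL_one ⟨hx.1, hlt⟩).le

lemma sum_extremalProfile_pos (hL : 1 < L) (hL_one : extremalProfile L 1 = 0)
    {t : Fin 2 → ℝ} (ht : t ∈ simplex 2 1) : 0 < ∑ i, extremalProfile L (t i) := by
  have hmem (i : Fin 2) : t i ∈ Set.Icc 0 1 := ⟨ht.1 i, le_of_mem_simplex ht i⟩
  have hlt : ∃ i, t i < 1 := by
    by_contra! hge
    have hsum := ht.2
    rw [Fin.sum_univ_two] at hsum
    linarith [hge 0, hge 1]
  obtain ⟨i, hi⟩ := hlt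
  exact Finset.sum_pos' (fun j _ => extremalProfile_nonneg hL hL_one (hmem j))
    ⟨i, Finset.mem_univ i, extremalProfile_pos hL hL_one ⟨ht.1 i, hi⟩⟩

lemma marginal_extremalProfile (hL : 1 < L) (hL_one : extremalProfile L 1 = 0)
    {t : Fin 2 → ℝ} (ht : t ∈ simplex 2 1) (i : Fin 2) :
    marginal i ((simplex 2 1).indicator fun t => ∑ j, extremalProfile L (t j)) t =
      L * extremalProfile L (t i.rev) := by
  have hcompl : Finset.univ \ {i} = {i.rev} := by
    revert i
    decide
  have hrev : t i.rev ∈ Set.Icc 0 1 := ⟨ht.1 _, le_of_mem_simplex ht _⟩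
  have hzero := Icc_zero_one_subset_Ioo hL ⟨le_rfl, zero_le_one⟩
  have hone_sub : 1 - t i.rev ∈ Set.Ioo (1 - L) L :=
    Icc_zero_one_subset_Ioo hL ⟨by linarith [hrev.2], by linarith [hrev.1]⟩
  have hint : IntervalIntegrable (extremalProfile L) volume 0 (1 - t i.rev) :=
    (continuousOn_extremalProfile.mono
      (Set.ordConnected_Ioo.uIcc_subset hzero hone_sub)).intervalIntegrable
  rw [marginal_indicator_simplex_sum _ ht i (by simpa [hcompl] using hint)]
  simp only [hcompl, Finset.sum_singleton]
  rw [integral_extremalProfile hzero hone_sub, sub_zero, sub_zero, hL_one, sub_sub_cancel]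
  ring

lemma isPositiveEigenfunction_extremalProfile (hL : 1 < L) (hL_one : extremalProfile L 1 = 0) :
    IsPositiveEigenfunction
      ((simplex 2 1).indicator fun t => ∑ i, extremalProfile L (t i)) L where
  memLp := by
    refine memLp_indicator_simplex (continuousOn_finsetSum _ fun i _ => ?_) 2
    exact continuousOn_extremalProfile.comp (by fun_prop) fun t ht =>
      Icc_zero_one_subset_Ioo hL ⟨ht.1 i, le_of_mem_simplex ht i⟩
  eq_zero_of_notMem _ ht := Set.indicator_of_notMem ht _
  pos_of_mem t ht := by
    rw [Set.indicator_of_mem ht]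
    exact sum_extremalProfile_pos hL hL_one ht
  sum_marginal t ht := by
    rw [Set.indicator_of_mem ht]
    simp only [marginal_extremalProfile hL hL_one ht, ← Finset.mul_sum]
    rw [← Equiv.sum_comp Fin.revPerm fun i => extremalProfile L (t i)]
    simp only [Fin.revPerm_apply]

end ExtremalProfile

section LambertW

variable {w : ℝ}

lemma log_eq_of_mul_exp_eq_exp_neg_one (hw : 0 < w)
    (hlambert : w * Real.exp w = Real.exp (-1)) : Real.log w = -1 - w := by
  have hlog := congrArg Real.log hlambert
  rw [Real.log_mul hw.ne' (Real.exp_ne_zero w), Real.log_exp, Real.log_exp] at hlog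
  linarith

lemma extremalProfile_one_eq_zero_of_log_eq (hw : 0 < w) (hw_one : w < 1)
    (hlog : Real.log w = -1 - w) : extremalProfile (1 / (1 - w)) 1 = 0 := by
  have hw_sub : 0 < 1 - w := sub_pos.2 hw_one
  have hL_sub_one : 1 / (1 - w) - 1 = w * (1 / (1 - w)) := by
    field_simp
    ring
  have hlog_L : Real.log (1 / (1 - w) - 1) - Real.log (1 / (1 - w)) = -1 - w := by
    rw [hL_sub_one, Real.log_mul hw.ne' (one_div_pos.2 hw_sub).ne', hlog]
    ring
  have hL : 2 * (1 / (1 - w)) - 1 = (1 + w) / (1 - w) := by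
    field_simp
    ring
  rw [extremalProfile, sub_add_cancel, hlog_L, hL]
  field_simp
  ring

end LambertW

/-- **Polymath8b, Corollary 6.3 (computation of `M₂`)**: if `w > 0` is the (unique)
positive real with `w e^w = e⁻¹` (i.e. `w = W(1/e)` for the Lambert `W`-function),
then `M₂ = 1/(1 - w) = 1.38593…`. -/
theorem M2_eq (w : ℝ) (hw : 0 < w) (hlambert : w * Real.exp w = Real.exp (-1)) :
    Mquant 2 = 1 / (1 - w) := by
  have hlog : Real.log w = -1 - w := log_eq_of_mul_exp_eq_exp_neg_one hw hlambert
  have hw_one : w < 1 := (Real.log_neg_iff hw).1 (by linarith)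
  have hL : 1 < 1 / (1 - w) := (one_lt_div (sub_pos.2 hw_one)).2 (by linarith)
  have hL_one : extremalProfile (1 / (1 - w)) 1 = 0 :=
    extremalProfile_one_eq_zero_of_log_eq hw hw_one hlog
  exact (isPositiveEigenfunction_extremalProfile hL hL_one).Mquant_eq
end

section
/- For every integer k ≥ 2 one has M_k ≤ (k/(k−1))·log k; equivalently, for every square-integrable F : [0,∞)^k → ℝ supported on R_k, ∑_{i=1}^k J_i(F) ≤ (k/(k−1))·(log k)·I(F). -/
open MeasureTheory

/-!
Attach to each coordinate `i` the weight `wᵢ(t) = r - ∑ⱼ tⱼ + k tᵢ` on the simplex `∑ⱼ tⱼ ≤ r`.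
On a line parallel to the `i`-th axis it reads `a + (k - 1) s` with `0 ≤ s ≤ a`, and
`∫₀ᵃ ds / (a + (k - 1) s) = log k / (k - 1)` does not depend on the line. Cauchy–Schwarz on each
line, followed by Fubini, therefore gives `Jᵢ(F) ≤ log k / (k - 1) * ∫ F² wᵢ`, and the weights add
up to the constant `k r`.
-/

section CauchySchwarz

variable {α β : Type*} [MeasurableSpace α] [MeasurableSpace β] {μ : Measure α} {ν : Measure β}

lemma memLp_two_sqrt {g : α → ℝ} (hg₀ : 0 ≤ᵐ[μ] g) (hg : Integrable g μ) :
    MemLp (fun x => √(g x)) 2 μ := by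
  refine (memLp_two_iff_integrable_sq hg.aemeasurable.sqrt.aestronglyMeasurable).2 (hg.congr ?_)
  filter_upwards [hg₀] with x hx using (Real.sq_sqrt hx).symm

lemma integral_sqrt_mul_sqrt_le {g h : α → ℝ} (hg₀ : 0 ≤ᵐ[μ] g) (hh₀ : 0 ≤ᵐ[μ] h)
    (hg : Integrable g μ) (hh : Integrable h μ) :
    ∫ x, √(g x) * √(h x) ∂μ ≤ √(∫ x, g x ∂μ) * √(∫ x, h x ∂μ) := by
  have integral_sqrt_rpow_two {u : α → ℝ} (hu : 0 ≤ᵐ[μ] u) :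
      ∫ x, √(u x) ^ (2 : ℝ) ∂μ = ∫ x, u x ∂μ :=
    integral_congr_ae <| hu.mono fun x hx => by simp [Real.sq_sqrt hx]
  have holder := integral_mul_le_Lp_mul_Lq_of_nonneg Real.HolderConjugate.two_two
    (.of_forall fun x => Real.sqrt_nonneg (g x)) (.of_forall fun x => Real.sqrt_nonneg (h x))
    (by simpa using memLp_two_sqrt hg₀ hg) (by simpa using memLp_two_sqrt hh₀ hh)
  rwa [integral_sqrt_rpow_two hg₀, integral_sqrt_rpow_two hh₀, ← Real.sqrt_eq_rpow,
    ← Real.sqrt_eq_rpow] at holder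

lemma sq_integral_le_integral_mul_integral_of_sq_le_mul {f g h : α → ℝ}
    (hg₀ : 0 ≤ᵐ[μ] g) (hh₀ : 0 ≤ᵐ[μ] h) (hg : Integrable g μ) (hh : Integrable h μ)
    (hfgh : ∀ᵐ x ∂μ, f x ^ 2 ≤ g x * h x) :
    (∫ x, f x ∂μ) ^ 2 ≤ (∫ x, g x ∂μ) * ∫ x, h x ∂μ := by
  have abs_le : ∀ᵐ x ∂μ, ‖f x‖ ≤ √(g x) * √(h x) := by
    filter_upwards [hg₀, hfgh] with x hgx hx
    rw [← Real.sqrt_mul hgx]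
    exact Real.abs_le_sqrt hx
  have integrable_sqrt_mul_sqrt : Integrable (fun x => √(g x) * √(h x)) μ :=
    (memLp_two_sqrt hg₀ hg).integrable_mul (memLp_two_sqrt hh₀ hh)
  calc (∫ x, f x ∂μ) ^ 2
      = ‖∫ x, f x ∂μ‖ ^ 2 := (sq_abs _).symm
    _ ≤ (√(∫ x, g x ∂μ) * √(∫ x, h x ∂μ)) ^ 2 := by
        gcongr
        exact (norm_integral_le_of_norm_le integrable_sqrt_mul_sqrt abs_le).trans
          (integral_sqrt_mul_sqrt_le hg₀ hh₀ hg hh)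
    _ = (∫ x, g x ∂μ) * ∫ x, h x ∂μ := by
        rw [mul_pow, Real.sq_sqrt (integral_nonneg_of_ae hg₀),
          Real.sq_sqrt (integral_nonneg_of_ae hh₀)]

lemma ae_ae_of_ae_prod_symm [SFinite μ] [SFinite ν] {p : α × β → Prop}
    (h : ∀ᵐ z ∂μ.prod ν, p z) : ∀ᵐ y ∂ν, ∀ᵐ x ∂μ, p (x, y) :=
  Measure.ae_ae_of_ae_prod (Measure.measurePreserving_swap.quasiMeasurePreserving.ae h)

lemma integral_sq_integral_le_mul_integral_prod [SFinite μ] [SFinite ν] {f g h : α × β → ℝ} {C : ℝ}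
    (hg₀ : 0 ≤ᵐ[μ.prod ν] g) (hh₀ : 0 ≤ᵐ[μ.prod ν] h)
    (hg : ∀ᵐ y ∂ν, Integrable (fun x => g (x, y)) μ) (hgC : ∀ᵐ y ∂ν, ∫ x, g (x, y) ∂μ ≤ C)
    (hh : Integrable h (μ.prod ν)) (hfgh : ∀ᵐ z ∂μ.prod ν, f z ^ 2 ≤ g z * h z) :
    ∫ y, (∫ x, f (x, y) ∂μ) ^ 2 ∂ν ≤ C * ∫ z, h z ∂μ.prod ν := by
  rw [integral_prod_symm h hh, ← integral_const_mul]
  refine integral_mono_of_nonneg (.of_forall fun y => sq_nonneg _)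
    (hh.integral_prod_right.const_mul C) ?_
  filter_upwards [ae_ae_of_ae_prod_symm hg₀, ae_ae_of_ae_prod_symm hh₀, hg, hgC, hh.prod_left_ae,
    ae_ae_of_ae_prod_symm hfgh] with y hgy₀ hhy₀ hgy hgCy hhy hfy
  exact (sq_integral_le_integral_mul_integral_of_sq_le_mul hgy₀ hhy₀ hgy hhy hfy).trans
    (mul_le_mul_of_nonneg_right hgCy (integral_nonneg_of_ae hhy₀))

end CauchySchwarz

section SplitCoordinate

variable {ι : Type*} [DecidableEq ι]

lemma measurable_piSplitAt_symm {α : ι → Type*} [∀ j, MeasurableSpace (α j)] (i : ι) :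
    Measurable (Equiv.piSplitAt i α).symm := by
  refine measurable_pi_iff.2 fun j => ?_
  rcases eq_or_ne j i with rfl | hj
  · simpa using measurable_fst
  · simpa [hj] using measurable_snd.eval (a := (⟨j, hj⟩ : {j // j ≠ i}))

lemma piSplitAt_symm_preimage_univ_pi {α : ι → Type*} (i : ι) (s : ∀ j, Set (α j)) :
    (Equiv.piSplitAt i α).symm ⁻¹' Set.univ.pi s =
      s i ×ˢ Set.univ.pi fun j : {j // j ≠ i} => s j := by
  ext ⟨x, y⟩
  simp only [Set.mem_preimage, Set.mem_univ_pi, Set.mem_prod]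
  refine ⟨fun h => ⟨by simpa using h i, fun j => by simpa [j.2] using h j⟩, ?_⟩
  rintro ⟨hx, hy⟩ j
  rcases eq_or_ne j i with rfl | hj
  · simpa using hx
  · simpa [hj] using hy ⟨j, hj⟩

lemma measurePreserving_piSplitAt_symm [Fintype ι] {α : ι → Type*} [∀ j, MeasurableSpace (α j)]
    (μ : ∀ j, Measure (α j)) [∀ j, SigmaFinite (μ j)] (i : ι) :
    MeasurePreserving (Equiv.piSplitAt i α).symm
      ((μ i).prod (Measure.pi fun j : {j // j ≠ i} => μ j)) (Measure.pi μ) := by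
  refine ⟨measurable_piSplitAt_symm i, (Measure.pi_eq fun s hs => ?_).symm⟩
  rw [Measure.map_apply (measurable_piSplitAt_symm i) (.univ_pi hs),
    piSplitAt_symm_preimage_univ_pi, Measure.prod_prod, Measure.pi_pi,
    Fintype.prod_eq_mul_prod_subtype_ne _ i]

lemma funSplitAt_symm_nonneg_iff {M : Type*} [Zero M] [Preorder M] {i : ι} {s : M}
    {y : {j // j ≠ i} → M} : 0 ≤ (Equiv.funSplitAt i M).symm (s, y) ↔ 0 ≤ s ∧ 0 ≤ y := by
  simpa [Set.mem_univ_pi] using!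
    Set.ext_iff.1 (piSplitAt_symm_preimage_univ_pi i fun _ => Set.Ici (0 : M)) (s, y)

lemma measurePreserving_funSplitAt_symm_Ici_zero [Fintype ι] (i : ι) :
    MeasurePreserving (Equiv.funSplitAt i ℝ).symm
      ((volume.restrict (Set.Ioi 0)).prod (volume.restrict (Set.Ici 0)))
      (volume.restrict (Set.Ici 0)) := by
  have preimage_Ici : (Equiv.funSplitAt i ℝ).symm ⁻¹' Set.Ici 0 = Set.Ici 0 ×ˢ Set.Ici 0 := by
    ext ⟨s, y⟩
    exact funSplitAt_symm_nonneg_iff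
  rw [restrict_Ioi_eq_restrict_Ici, Measure.prod_restrict, ← preimage_Ici]
  exact (measurePreserving_piSplitAt_symm (fun _ => volume) i).restrict_preimage measurableSet_Ici

lemma sum_funSplitAt_symm {M : Type*} [AddCommMonoid M] [Fintype ι] (i : ι) (s : M)
    (y : {j // j ≠ i} → M) : ∑ j, (Equiv.funSplitAt i M).symm (s, y) j = s + ∑ j, y j := by
  rw [Fintype.sum_eq_add_sum_subtype_ne _ i]
  congr 1
  · simp
  · exact Finset.sum_congr rfl fun j _ => by simp [j.2]

end SplitCoordinate

section InvIntegral

variable {a c : ℝ}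

lemma add_mul_pos_of_mem_Icc (ha : 0 < a) (hc : -1 < c) {s : ℝ} (hs : s ∈ Set.Icc 0 a) :
    0 < a + c * s := by
  rcases hs.2.eq_or_lt with rfl | hsa
  · nlinarith
  · nlinarith [hs.1]

lemma integrableOn_inv_add_mul (hc : -1 < c) :
    IntegrableOn (fun s => (a + c * s)⁻¹) (Set.Ioc 0 a) := by
  rcases le_or_gt a 0 with ha | ha
  · simp [Set.Ioc_eq_empty ha.not_gt]
  · exact (ContinuousOn.integrableOn_Icc
      (.inv₀ (by fun_prop) fun s hs => (add_mul_pos_of_mem_Icc ha hc hs).ne')).mono_set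
        Set.Ioc_subset_Icc_self

lemma integral_inv_add_mul (ha : 0 < a) (hc : -1 < c) (hc₀ : c ≠ 0) :
    ∫ s in (0)..a, (a + c * s)⁻¹ = Real.log (1 + c) / c := by
  have endpoints : (a + c * a) / (a + c * 0) = 1 + c := by
    rw [mul_zero, add_zero]
    field_simp
  rw [intervalIntegral.integral_comp_add_mul (fun x => x⁻¹) hc₀,
    integral_inv_of_pos (by simpa using ha) (add_mul_pos_of_mem_Icc ha hc ⟨ha.le, le_rfl⟩),
    endpoints, smul_eq_mul, div_eq_inv_mul]

lemma setIntegral_inv_add_mul_le (hc : 0 < c) :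
    ∫ s in Set.Ioc 0 a, (a + c * s)⁻¹ ≤ Real.log (1 + c) / c := by
  rcases le_or_gt a 0 with ha | ha
  · rw [Set.Ioc_eq_empty ha.not_gt, setIntegral_empty]
    exact div_nonneg (Real.log_nonneg (by linarith)) hc.le
  · rw [← intervalIntegral.integral_of_le ha.le,
      integral_inv_add_mul ha (by linarith) hc.ne']

end InvIntegral

lemma sieveJ_eq_integral_funSplitAt {k : ℕ} (i : Fin k) (F : (Fin k → ℝ) → ℝ) :
    sieveJ i F = ∫ y in Set.Ici 0,
      (∫ s in Set.Ioi 0, F ((Equiv.funSplitAt i ℝ).symm (s, y))) ^ 2 := by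
  have funSplitAt_symm_eq (s : ℝ) (y : {j : Fin k // j ≠ i} → ℝ) :
      (Equiv.funSplitAt i ℝ).symm (s, y) = fun j => if h : j = i then s else y ⟨j, h⟩ :=
    funext fun j => Equiv.funSplitAt_symm_apply i ℝ (s, y) j
  simp_rw [funSplitAt_symm_eq]
  rfl

lemma sieveJ_le_mul_integral {k : ℕ} (i : Fin k) {F G H : (Fin k → ℝ) → ℝ} {C : ℝ}
    (hG₀ : 0 ≤ᵐ[volume.restrict (Set.Ici 0)] G) (hH₀ : 0 ≤ᵐ[volume.restrict (Set.Ici 0)] H)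
    (hG : ∀ᵐ y ∂volume.restrict (Set.Ici 0),
      IntegrableOn (fun s => G ((Equiv.funSplitAt i ℝ).symm (s, y))) (Set.Ioi 0))
    (hGC : ∀ᵐ y ∂volume.restrict (Set.Ici 0),
      ∫ s in Set.Ioi 0, G ((Equiv.funSplitAt i ℝ).symm (s, y)) ≤ C)
    (hH : IntegrableOn H (Set.Ici 0))
    (hFGH : ∀ᵐ t ∂volume.restrict (Set.Ici 0), F t ^ 2 ≤ G t * H t) :
    sieveJ i F ≤ C * ∫ t in Set.Ici 0, H t := by
  have hsplit := measurePreserving_funSplitAt_symm_Ici_zero i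
  rw [sieveJ_eq_integral_funSplitAt,
    ← hsplit.integral_comp (Homeomorph.funSplitAt ℝ i).symm.measurableEmbedding]
  exact integral_sq_integral_le_mul_integral_prod
    (hsplit.quasiMeasurePreserving.ae hG₀) (hsplit.quasiMeasurePreserving.ae hH₀) hG hGC
    (hsplit.integrable_comp_of_integrable hH) (hsplit.quasiMeasurePreserving.ae hFGH)

/-- The weight `wᵢ(t) = r - ∑ⱼ tⱼ + k tᵢ` on the simplex `{t ∈ [0,∞)^k : t₁ + ⋯ + t_k ≤ r}` used in
the Cauchy–Schwarz bound for `J_i`. It is defined on all of `ℝ^k`, where it may be negative. -/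
def simplexWeight {k : ℕ} (r : ℝ) (i : Fin k) (t : Fin k → ℝ) : ℝ :=
  r - ∑ j, t j + k * t i

section SimplexWeight

variable {k : ℕ} {r : ℝ} {i : Fin k} {t : Fin k → ℝ}

lemma sum_simplexWeight (r : ℝ) (t : Fin k → ℝ) : ∑ i, simplexWeight r i t = k * r := by
  simp only [simplexWeight, Finset.sum_add_distrib, Finset.sum_const, Finset.card_univ,
    Fintype.card_fin, nsmul_eq_mul, ← Finset.mul_sum]
  ring

lemma simplexWeight_nonneg (ht : t ∈ simplex k r) : 0 ≤ simplexWeight r i t :=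
  add_nonneg (sub_nonneg.2 ht.2) (mul_nonneg k.cast_nonneg (ht.1 i))

lemma simplexWeight_pos (ht : t ∈ simplex k r) (hti : t i ≠ 0) : 0 < simplexWeight r i t :=
  add_pos_of_nonneg_of_pos (sub_nonneg.2 ht.2)
    (mul_pos (Nat.cast_pos.2 i.pos) ((ht.1 i).lt_of_ne' hti))

lemma simplexWeight_le (ht : t ∈ simplex k r) : simplexWeight r i t ≤ k * r :=
  (Finset.single_le_sum (f := fun i => simplexWeight r i t) (fun _ _ => simplexWeight_nonneg ht)
    (Finset.mem_univ i)).trans_eq (sum_simplexWeight r t)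

@[fun_prop]
lemma continuous_simplexWeight (r : ℝ) (i : Fin k) : Continuous (simplexWeight r i) := by
  unfold simplexWeight
  fun_prop

lemma simplexWeight_funSplitAt_symm (r s : ℝ) (y : {j : Fin k // j ≠ i} → ℝ) :
    simplexWeight r i ((Equiv.funSplitAt i ℝ).symm (s, y)) =
      (r - ∑ j, y j) + ((k : ℝ) - 1) * s := by
  rw [simplexWeight, sum_funSplitAt_symm, Equiv.funSplitAt_symm_apply, dif_pos rfl]
  ring

lemma funSplitAt_symm_mem_simplex_iff {s : ℝ} {y : {j : Fin k // j ≠ i} → ℝ} :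
    (Equiv.funSplitAt i ℝ).symm (s, y) ∈ simplex k r ↔
      (0 ≤ s ∧ 0 ≤ y) ∧ s ≤ r - ∑ j, y j := by
  rw [le_sub_iff_add_le, ← sum_funSplitAt_symm, ← funSplitAt_symm_nonneg_iff]
  rfl

lemma indicator_inv_simplexWeight_funSplitAt_symm {s : ℝ} (hs : 0 < s)
    {y : {j : Fin k // j ≠ i} → ℝ} (hy : 0 ≤ y) :
    (simplex k r).indicator (simplexWeight r i)⁻¹ ((Equiv.funSplitAt i ℝ).symm (s, y)) =
      (Set.Ioc 0 (r - ∑ j, y j)).indicator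
        (fun s => ((r - ∑ j, y j) + ((k : ℝ) - 1) * s)⁻¹) s := by
  have mem_iff : (Equiv.funSplitAt i ℝ).symm (s, y) ∈ simplex k r ↔
      s ∈ Set.Ioc 0 (r - ∑ j, y j) := by
    simp [funSplitAt_symm_mem_simplex_iff, hs, hs.le, hy]
  simp only [Set.indicator, mem_iff, Pi.inv_apply, simplexWeight_funSplitAt_symm]

lemma integrableOn_inv_simplexWeight_funSplitAt_symm {y : {j : Fin k // j ≠ i} → ℝ}
    (hy : 0 ≤ y) :
    IntegrableOn (fun s => (simplex k r).indicator (simplexWeight r i)⁻¹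
      ((Equiv.funSplitAt i ℝ).symm (s, y))) (Set.Ioi 0) := by
  have hk₀ : (0 : ℝ) < k := Nat.cast_pos.2 i.pos
  exact ((integrableOn_inv_add_mul (by linarith)).integrable_indicator
    measurableSet_Ioc).integrableOn.congr_fun
      (fun s hs => (indicator_inv_simplexWeight_funSplitAt_symm hs hy).symm) measurableSet_Ioi

lemma setIntegral_inv_simplexWeight_funSplitAt_symm_le (hk : 1 < k) {y : {j : Fin k // j ≠ i} → ℝ}
    (hy : 0 ≤ y) :
    ∫ s in Set.Ioi 0, (simplex k r).indicator (simplexWeight r i)⁻¹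
      ((Equiv.funSplitAt i ℝ).symm (s, y)) ≤ Real.log k / ((k : ℝ) - 1) := by
  have hk₁ : (1 : ℝ) < k := Nat.one_lt_cast.2 hk
  rw [setIntegral_congr_fun measurableSet_Ioi fun s hs =>
      indicator_inv_simplexWeight_funSplitAt_symm hs hy,
    setIntegral_indicator measurableSet_Ioc, Set.inter_eq_right.2 Set.Ioc_subset_Ioi_self]
  simpa using setIntegral_inv_add_mul_le (a := r - ∑ j, y j) (sub_pos.2 hk₁)

end SimplexWeight

section SupportedOnSimplex

variable {k : ℕ} {r : ℝ} {F : (Fin k → ℝ) → ℝ}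

lemma sq_mul_simplexWeight_nonneg (hsupp : ∀ t, t ∉ simplex k r → F t = 0) (i : Fin k)
    (t : Fin k → ℝ) : 0 ≤ F t ^ 2 * simplexWeight r i t := by
  by_cases ht : t ∈ simplex k r
  · exact mul_nonneg (sq_nonneg _) (simplexWeight_nonneg ht)
  · simp [hsupp t ht]

lemma sq_le_indicator_inv_simplexWeight_mul (hsupp : ∀ t, t ∉ simplex k r → F t = 0) {i : Fin k}
    {t : Fin k → ℝ} (hti : t i ≠ 0) :
    F t ^ 2 ≤ (simplex k r).indicator (simplexWeight r i)⁻¹ t *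
      (F t ^ 2 * simplexWeight r i t) := by
  by_cases ht : t ∈ simplex k r
  · rw [Set.indicator_of_mem ht, Pi.inv_apply, mul_comm,
      mul_inv_cancel_right₀ (simplexWeight_pos ht hti).ne']
  · simp [hsupp t ht]

lemma integrableOn_sq_mul_simplexWeight (hF : IntegrableOn (fun t => F t ^ 2) (Set.Ici 0))
    (hsupp : ∀ t, t ∉ simplex k r → F t = 0) (i : Fin k) :
    IntegrableOn (fun t => F t ^ 2 * simplexWeight r i t) (Set.Ici 0) := by
  refine (hF.mul_const (k * r)).mono' (hF.aestronglyMeasurable.mul (by fun_prop))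
    (.of_forall fun t => ?_)
  rw [Real.norm_of_nonneg (sq_mul_simplexWeight_nonneg hsupp i t)]
  by_cases ht : t ∈ simplex k r
  · exact mul_le_mul_of_nonneg_left (simplexWeight_le ht) (sq_nonneg _)
  · simp [hsupp t ht]

lemma sieveJ_le_integral_sq_mul_simplexWeight (hk : 1 < k)
    (hF : IntegrableOn (fun t => F t ^ 2) (Set.Ici 0)) (hsupp : ∀ t, t ∉ simplex k r → F t = 0)
    (i : Fin k) :
    sieveJ i F ≤
      Real.log k / ((k : ℝ) - 1) * ∫ t in Set.Ici 0, F t ^ 2 * simplexWeight r i t := by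
  have weight_inv_nonneg (t : Fin k → ℝ) : 0 ≤ (simplex k r).indicator (simplexWeight r i)⁻¹ t :=
    Set.indicator_nonneg (fun t ht => inv_nonneg.2 (simplexWeight_nonneg ht)) t
  -- The weight vanishes where `∑ⱼ tⱼ = r` and `tᵢ = 0`, so this can fail on a null set.
  have sq_le : ∀ᵐ t ∂volume.restrict (Set.Ici 0), F t ^ 2 ≤
      (simplex k r).indicator (simplexWeight r i)⁻¹ t * (F t ^ 2 * simplexWeight r i t) :=
    (ae_restrict_of_ae (Measure.ae_eval_ne _ i 0)).mono fun t hti =>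
      sq_le_indicator_inv_simplexWeight_mul hsupp hti
  have nonneg_ae : ∀ᵐ y : {j // j ≠ i} → ℝ ∂volume.restrict (Set.Ici 0), 0 ≤ y :=
    ae_restrict_mem measurableSet_Ici
  exact sieveJ_le_mul_integral i (.of_forall weight_inv_nonneg)
    (.of_forall (sq_mul_simplexWeight_nonneg hsupp i))
    (nonneg_ae.mono fun y hy => integrableOn_inv_simplexWeight_funSplitAt_symm hy)
    (nonneg_ae.mono fun y hy => setIntegral_inv_simplexWeight_funSplitAt_symm_le hk hy)
    (integrableOn_sq_mul_simplexWeight hF hsupp i) sq_le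

lemma sum_sieveJ_le (hk : 1 < k)
    (hF : IntegrableOn (fun t => F t ^ 2) (Set.Ici 0)) (hsupp : ∀ t, t ∉ simplex k r → F t = 0) :
    ∑ i, sieveJ i F ≤ r * ((k : ℝ) / ((k : ℝ) - 1) * Real.log k) * sieveI F :=
  calc ∑ i, sieveJ i F
      ≤ ∑ i, Real.log k / ((k : ℝ) - 1) * ∫ t in Set.Ici 0, F t ^ 2 * simplexWeight r i t :=
        Finset.sum_le_sum fun i _ => sieveJ_le_integral_sq_mul_simplexWeight hk hF hsupp i
    _ = Real.log k / ((k : ℝ) - 1) * ∫ t in Set.Ici 0, F t ^ 2 * (k * r) := by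
        rw [← Finset.mul_sum, ← integral_finsetSum _ fun i _ =>
          integrableOn_sq_mul_simplexWeight hF hsupp i]
        simp_rw [← Finset.mul_sum, sum_simplexWeight]
    _ = Real.log k / ((k : ℝ) - 1) * (sieveI F * (k * r)) := by
        rw [integral_mul_const]
        rfl
    _ = r * ((k : ℝ) / ((k : ℝ) - 1) * Real.log k) * sieveI F := by ring

end SupportedOnSimplex

/-- **Polymath8b, Corollary 6.4**: `M_k ≤ (k/(k-1)) log k` for every `k ≥ 2`;
equivalently, `∑ᵢ J_i(F) ≤ (k/(k-1)) (log k) I(F)` for every square-integrable `F`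
supported on `R_k`. -/
theorem Mk_upper_bound (k : ℕ) (hk : 2 ≤ k) :
    Mquant k ≤ (k : ℝ) / ((k : ℝ) - 1) * Real.log k ∧
    ∀ F : (Fin k → ℝ) → ℝ, MemLp F 2 volume → (∀ t, t ∉ simplex k 1 → F t = 0) →
      ∑ i, sieveJ i F ≤ (k : ℝ) / ((k : ℝ) - 1) * Real.log k * sieveI F := by
  have hk₁ : (1 : ℝ) < k := Nat.one_lt_cast.2 hk
  have bound (F : (Fin k → ℝ) → ℝ) (hF : MemLp F 2 volume)
      (hsupp : ∀ t, t ∉ simplex k 1 → F t = 0) :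
      ∑ i, sieveJ i F ≤ (k : ℝ) / ((k : ℝ) - 1) * Real.log k * sieveI F := by
    simpa using sum_sieveJ_le hk hF.integrable_sq.integrableOn hsupp
  have const_nonneg : 0 ≤ (k : ℝ) / ((k : ℝ) - 1) * Real.log k :=
    mul_nonneg (div_nonneg k.cast_nonneg (sub_nonneg.2 hk₁.le)) (Real.log_nonneg hk₁.le)
  refine ⟨Real.sSup_le ?_ const_nonneg, bound⟩
  rintro _ ⟨F, hF, hsupp, -, rfl⟩
  exact div_le_of_le_mul₀ (integral_nonneg fun t => sq_nonneg _) const_nonneg (bound F hF hsupp)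
end

section
/- There exists an absolute constant C > 0 such that M_k ≥ log k − C for all integers k ≥ C. -/
open MeasureTheory

/-!
The test functions are `F(t) = w(t₁ + ⋯ + t_k) g(t₁) ⋯ g(t_k)`, where `∫ g² = 1` and `w` is a
cutoff supported in `(-∞, 1]`. Reading `g²` as a probability density and writing
`S = t₁ + ⋯ + t_k`, one has `I(F) = E[w(S)²]` and `J_i(F) = E[X(S - t_i)²]` with
`X(σ) = ∫ w(s + σ) g(s) ds`. If `w` drops from `1` to `0` linearly over an interval of length `δ`,
then `X(σ) ≥ w(σ) ∫ g - δ⁻¹ ∫ s g(s) ds`, so each `J_i(F)` is at least `(∫ g)² I(F)` up to a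
multiple of `δ⁻¹ (∫ g) ∫ s g(s) ds`. That error is proportional to `I(F)`, because `I(F) ≥ 1 / 2`
by Chebyshev's inequality as soon as `S` concentrates below `1 - δ`. For `g(t)` proportional to
`1 / (T + k t)` on `[0, T]`, with `T = δ` of order `1 / log k`, the main term `k (∫ g)²` is
`log k + O(1)` and the total error is `O(1)`.
-/

open ProbabilityTheory

section Product

variable {ι : Type*} [Fintype ι]

theorem pi_withDensity_ofReal {E : Type*} [MeasurableSpace E] {μ : ι → Measure E}
    [∀ i, SigmaFinite (μ i)] {p : ι → E → ℝ} (hp : ∀ i, Integrable (p i) (μ i))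
    (hp₀ : ∀ i x, 0 ≤ p i x) :
    Measure.pi (fun i => (μ i).withDensity fun x => ENNReal.ofReal (p i x)) =
      (Measure.pi μ).withDensity fun y => ENNReal.ofReal (∏ i, p i (y i)) := by
  have (i : ι) := isFiniteMeasure_withDensity_ofReal (hp i).2
  refine Measure.pi_eq fun s hs => ?_
  rw [withDensity_apply _ (MeasurableSet.univ_pi hs), Measure.restrict_pi_pi,
    ← ofReal_integral_eq_lintegral_ofReal
      (Integrable.fintype_prod_dep fun i => (hp i).restrict)
      (ae_of_all _ fun y => Finset.prod_nonneg fun i _ => hp₀ i (y i)),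
    integral_fintype_prod_eq_prod,
    ENNReal.ofReal_prod_of_nonneg fun i _ => integral_nonneg (hp₀ i)]
  refine Finset.prod_congr rfl fun i _ => ?_
  rw [withDensity_apply _ (hs i),
    ofReal_integral_eq_lintegral_ofReal (hp i).restrict (ae_of_all _ (hp₀ i))]

theorem measurePreserving_subtype_restrict {X : ι → Type*} [∀ i, MeasurableSpace (X i)]
    (μ : ∀ i, Measure (X i)) [∀ i, IsProbabilityMeasure (μ i)] (p : ι → Prop) [DecidablePred p] :
    MeasurePreserving (fun (t : ∀ i, X i) (i : Subtype p) => t i) (Measure.pi μ)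
      (Measure.pi fun i : Subtype p => μ i) :=
  measurePreserving_fst.comp (measurePreserving_piEquivPiSubtypeProd μ p)

end Product

section FunSplitAt

variable {ι E M : Type*} [DecidableEq ι] (i : ι)

/-- The splitting off of the coordinate `i`, as a measurable equivalence; its inverse is the
insertion of a coordinate that occurs in `sieveJ`. -/
def measurableFunSplitAt (E : Type*) [MeasurableSpace E] : (ι → E) ≃ᵐ E × ({j // j ≠ i} → E) :=
  (MeasurableEquiv.piEquivPiSubtypeProd (fun _ => E) (· = i)).trans
    ((MeasurableEquiv.funUnique {j // j = i} E).prodCongr (MeasurableEquiv.refl _))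

variable [Fintype ι]

theorem measurePreserving_measurableFunSplitAt [MeasurableSpace E] (μ : Measure E) [SigmaFinite μ] :
    MeasurePreserving (measurableFunSplitAt i E) (Measure.pi fun _ => μ)
      (μ.prod (Measure.pi fun _ => μ)) := by
  have hsub := measurePreserving_piEquivPiSubtypeProd (fun _ => μ) (· = i)
  have huniq : MeasurePreserving (MeasurableEquiv.funUnique {j // j = i} E)
      (@Measure.pi _ _ (Subtype.fintype (· = i)) _ fun _ => μ) μ := by
    convert measurePreserving_funUnique μ {j // j = i}
  exact (huniq.prod (MeasurePreserving.id _)).comp hsub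

theorem integrable_comp_dite [MeasurableSpace E] {μ : Measure E} [SigmaFinite μ] {f : (ι → E) → ℝ}
    (hf : Integrable f (Measure.pi fun _ => μ)) :
    Integrable (fun z : E × ({j // j ≠ i} → E) => f fun j => if h : j = i then z.1 else z.2 ⟨j, h⟩)
      (μ.prod (Measure.pi fun _ => μ)) :=
  (measurePreserving_measurableFunSplitAt i μ).symm.integrable_comp_of_integrable hf

theorem integral_pi_eq_integral_integral_dite [MeasurableSpace E] {μ : Measure E} [SigmaFinite μ]
    {f : (ι → E) → ℝ} (hf : Integrable f (Measure.pi fun _ => μ)) :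
    ∫ t, f t ∂(Measure.pi fun _ => μ) = ∫ y : {j // j ≠ i} → E,
      ∫ s, f (fun j => if h : j = i then s else y ⟨j, h⟩) ∂μ ∂(Measure.pi fun _ => μ) := by
  rw [← (measurePreserving_measurableFunSplitAt i μ).symm.integral_comp' f]
  exact integral_prod_symm _ (integrable_comp_dite i hf)

@[to_additive]
theorem prod_dite_eq_mul_prod [CommMonoid M] (φ : E → M) (s : E) (y : {j // j ≠ i} → E) :
    ∏ j, φ (if h : j = i then s else y ⟨j, h⟩) = φ s * ∏ j, φ (y j) := by
  rw [Fintype.prod_eq_mul_prod_subtype_ne _ i, dif_pos rfl]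
  exact congrArg _ (Finset.prod_congr rfl fun j _ => by rw [dif_neg j.2])

end FunSplitAt

theorem sq_integral_le_integral_sq {Ω : Type*} [MeasurableSpace Ω] {μ : Measure Ω}
    [IsProbabilityMeasure μ] {f : Ω → ℝ} (hf : Integrable (fun x => f x ^ 2) μ) :
    (∫ x, f x ∂μ) ^ 2 ≤ ∫ x, f x ^ 2 ∂μ := by
  by_cases hfi : Integrable f μ
  · have hvar := variance_eq_sub ((memLp_two_iff_integrable_sq hfi.1).2 hf)
    simp only [Pi.pow_apply] at hvar
    linarith [variance_nonneg f μ]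
  · rw [integral_undef hfi, zero_pow two_ne_zero]
    exact integral_nonneg fun _ => sq_nonneg _

theorem measureReal_pi_le_sum_le {ι : Type*} [Fintype ι] {μ : Measure ℝ} [IsProbabilityMeasure μ]
    (hμ : MemLp id 2 μ) {b : ℝ} (hb : Fintype.card ι * ∫ x, x ∂μ < b) :
    (Measure.pi fun _ : ι => μ).real {t | b ≤ ∑ i, t i} ≤
      Fintype.card ι * Var[id; μ] / (b - Fintype.card ι * ∫ x, x ∂μ) ^ 2 := by
  set ν := Measure.pi fun _ : ι => μ
  set S : (ι → ℝ) → ℝ := ∑ i, fun t => id (t i) with hS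
  have hcoord (i : ι) : MemLp (fun t : ι → ℝ => id (t i)) 2 ν :=
    hμ.comp_measurePreserving (measurePreserving_eval _ i)
  have hmean : ν[S] = Fintype.card ι * ∫ x, x ∂μ := by
    have heval (i : ι) : ∫ t, id (t i) ∂ν = ∫ x, x ∂μ :=
      integral_comp_eval (μ := fun _ : ι => μ) aestronglyMeasurable_id
    simp_rw [S, Finset.sum_apply]
    rw [integral_finsetSum _ fun i _ => (hcoord i).integrable one_le_two, Finset.sum_congr rfl
      fun i _ => heval i, Finset.sum_const, nsmul_eq_mul, Finset.card_univ]
  have hvar : Var[S; ν] = Fintype.card ι * Var[id; μ] := by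
    rw [hS, variance_sum_pi fun _ : ι => hμ]
    simp
  rw [← hmean] at hb ⊢
  rw [← hvar]
  have hcheb := meas_ge_le_variance_div_sq (X := S)
    (memLp_finsetSum' _ fun i _ => hcoord i) (sub_pos.2 hb)
  refine (measureReal_mono fun t ht => ?_).trans
    (ENNReal.toReal_le_of_le_ofReal (div_nonneg (variance_nonneg _ _) (sq_nonneg _)) hcheb)
  have hSt : b ≤ S t := by simpa [S] using ht
  exact (sub_le_sub_right hSt _).trans (le_abs_self _)

section SieveFunctionals

variable {k : ℕ} {F : (Fin k → ℝ) → ℝ}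

theorem mem_Icc_of_mem_simplex {c : ℝ} {t : Fin k → ℝ} (ht : t ∈ simplex k c) (i : Fin k) :
    t i ∈ Set.Icc 0 c :=
  ⟨ht.1 i, (Finset.single_le_sum (fun j _ => ht.1 j) (Finset.mem_univ i)).trans ht.2⟩

theorem sieveI_eq_integral_s14 {c : ℝ} (hsupp : ∀ t, t ∉ simplex k c → F t = 0) :
    sieveI F = ∫ t, F t ^ 2 :=
  setIntegral_eq_integral_of_forall_compl_eq_zero fun t ht => by
    rw [hsupp t fun h => ht h.1, zero_pow two_ne_zero]

theorem sq_setIntegral_Ioi_le {f : ℝ → ℝ} (hsupp : ∀ s, s ∉ Set.Icc 0 1 → f s = 0)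
    (hf : Integrable fun s => f s ^ 2) : (∫ s in Set.Ioi 0, f s) ^ 2 ≤ ∫ s, f s ^ 2 := by
  have : IsProbabilityMeasure (volume.restrict (Set.Icc (0 : ℝ) 1)) := ⟨by simp⟩
  calc (∫ s in Set.Ioi 0, f s) ^ 2
      = (∫ s in Set.Icc 0 1, f s) ^ 2 := by
        rw [← integral_Ici_eq_integral_Ioi,
          setIntegral_eq_integral_of_forall_compl_eq_zero (s := Set.Ici 0) fun s hs =>
            hsupp s fun h => hs h.1,
          setIntegral_eq_integral_of_forall_compl_eq_zero hsupp]
    _ ≤ ∫ s in Set.Icc 0 1, f s ^ 2 := sq_integral_le_integral_sq hf.restrict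
    _ ≤ ∫ s, f s ^ 2 := setIntegral_le_integral hf (ae_of_all _ fun _ => sq_nonneg _)

theorem sieveJ_le_sieveI (hF : MemLp F 2) (hsupp : ∀ t, t ∉ simplex k 1 → F t = 0) (i : Fin k) :
    sieveJ i F ≤ sieveI F := by
  have hint := integrable_comp_dite i hF.integrable_sq
  rw [sieveI_eq_integral_s14 hsupp]
  refine le_of_le_of_eq ?_ (integral_pi_eq_integral_integral_dite i hF.integrable_sq).symm
  have hinner := hint.integral_prod_right
  refine (integral_mono_of_nonneg (ae_of_all _ fun _ => sq_nonneg _) hinner.restrict ?_).trans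
    (setIntegral_le_integral hinner (ae_of_all _ fun y => integral_nonneg fun _ => sq_nonneg _))
  filter_upwards [ae_restrict_of_ae hint.prod_left_ae] with y hy
  exact sq_setIntegral_Ioi_le (fun s hs => hsupp _ fun h => hs <| by
    simpa using mem_Icc_of_mem_simplex h i) hy

theorem le_Mquant {c : ℝ} (hF : MemLp F 2) (hsupp : ∀ t, t ∉ simplex k 1 → F t = 0)
    (hpos : 0 < sieveI F) (hc : c * sieveI F ≤ ∑ i, sieveJ i F) : c ≤ Mquant k := by
  refine ((le_div_iff₀ hpos).2 hc).trans (le_csSup ⟨k, ?_⟩ ⟨F, hF, hsupp, fun hzero => ?_, rfl⟩)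
  · rintro r ⟨G, hG, hGsupp, -, rfl⟩
    refine div_le_of_le_mul₀ (integral_nonneg fun _ => sq_nonneg _) k.cast_nonneg ?_
    calc ∑ i, sieveJ i G ≤ ∑ _i : Fin k, sieveI G :=
          Finset.sum_le_sum fun i _ => sieveJ_le_sieveI hG hGsupp i
      _ = k * sieveI G := by simp
  · rw [sieveI_eq_integral_s14 hsupp] at hpos
    refine hpos.ne' (integral_eq_zero_of_ae (hzero.mono fun t ht => ?_))
    simp [ht]

end SieveFunctionals

section LinearCutoff

/-- The cutoff equal to `1` up to `1 - δ`, to `0` from `1` on, and affine in between. -/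
noncomputable def linearCutoff (δ s : ℝ) : ℝ :=
  max 0 (min 1 ((1 - s) / δ))

theorem linearCutoff_nonneg (δ s : ℝ) : 0 ≤ linearCutoff δ s :=
  le_max_left _ _

theorem linearCutoff_le_one (δ s : ℝ) : linearCutoff δ s ≤ 1 :=
  max_le zero_le_one (min_le_left _ _)

theorem continuous_linearCutoff (δ : ℝ) : Continuous (linearCutoff δ) := by
  unfold linearCutoff
  fun_prop

theorem integrable_sq_linearCutoff {Ω : Type*} [MeasurableSpace Ω] {μ : Measure Ω}
    [IsFiniteMeasure μ] {S : Ω → ℝ} (hS : Measurable S) (δ : ℝ) :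
    Integrable (fun x => linearCutoff δ (S x) ^ 2) μ := by
  refine .of_bound (C := 1) ?_ (ae_of_all _ fun x => ?_)
  · exact (((continuous_linearCutoff δ).measurable.comp hS).pow_const 2).aestronglyMeasurable
  · rw [norm_pow, Real.norm_of_nonneg (linearCutoff_nonneg _ _)]
    exact pow_le_one₀ (linearCutoff_nonneg _ _) (linearCutoff_le_one _ _)

variable {δ s : ℝ} (hδ : 0 < δ)
include hδ

theorem linearCutoff_eq_one (hs : s ≤ 1 - δ) : linearCutoff δ s = 1 := by
  rw [linearCutoff, min_eq_left ((one_le_div hδ).2 (by linarith)), max_eq_right zero_le_one]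

theorem linearCutoff_eq_zero (hs : 1 ≤ s) : linearCutoff δ s = 0 :=
  max_eq_left ((min_le_right _ _).trans (div_nonpos_of_nonpos_of_nonneg (by linarith) hδ.le))

theorem antitone_linearCutoff : Antitone (linearCutoff δ) := fun _ _ h => by
  unfold linearCutoff
  gcongr

theorem linearCutoff_sub_div_le {t : ℝ} (ht : 0 ≤ t) :
    linearCutoff δ s - t / δ ≤ linearCutoff δ (t + s) := by
  have hsplit : (1 - (t + s)) / δ = (1 - s) / δ - t / δ := by ring
  have htδ : 0 ≤ t / δ := by positivity
  rw [linearCutoff, linearCutoff, hsplit]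
  grind

end LinearCutoff

section SqDensity

variable {g : ℝ → ℝ}

/-- The measure with density `g ^ 2`, through which the integrals defining `sieveI` and `sieveJ` are
read as expectations. -/
noncomputable def sqDensity (g : ℝ → ℝ) : Measure ℝ :=
  volume.withDensity fun t => ENNReal.ofReal (g t ^ 2)

theorem integral_sqDensity (hg : Measurable g) (f : ℝ → ℝ) :
    ∫ t, f t ∂sqDensity g = ∫ t, f t * g t ^ 2 := by
  rw [sqDensity, integral_withDensity_eq_integral_toReal_smul (by fun_prop) (by simp)]
  simp [ENNReal.toReal_ofReal (sq_nonneg _), mul_comm]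

theorem integral_pi_sqDensity {ι : Type*} [Fintype ι] (hg : Measurable g)
    (hint : Integrable fun t => g t ^ 2) (f : (ι → ℝ) → ℝ) :
    ∫ y, f y ∂(Measure.pi fun _ => sqDensity g) = ∫ y, f y * (∏ i, g (y i)) ^ 2 := by
  simp only [sqDensity]
  rw [pi_withDensity_ofReal (fun _ => hint) fun _ _ => sq_nonneg _,
    integral_withDensity_eq_integral_toReal_smul (by fun_prop) (by simp)]
  refine integral_congr_ae (ae_of_all _ fun y => ?_)
  simp only [Finset.prod_pow, ENNReal.toReal_ofReal (sq_nonneg _), smul_eq_mul, mul_comm]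

theorem isProbabilityMeasure_sqDensity (hnorm : ∫ t, g t ^ 2 = 1) :
    IsProbabilityMeasure (sqDensity g) := by
  have hint : Integrable fun t => g t ^ 2 := .of_integral_ne_zero (by simp [hnorm])
  constructor
  rw [sqDensity, withDensity_apply _ .univ, Measure.restrict_univ,
    ← ofReal_integral_eq_lintegral_ofReal hint (ae_of_all _ fun _ => sq_nonneg _), hnorm,
    ENNReal.ofReal_one]

theorem memLp_id_sqDensity (hg : Measurable g) (hint : Integrable fun t => t ^ 2 * g t ^ 2) :
    MemLp id 2 (sqDensity g) := by
  rw [memLp_two_iff_integrable_sq aestronglyMeasurable_id, sqDensity,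
    integrable_withDensity_iff (by fun_prop) (by simp)]
  simpa [ENNReal.toReal_ofReal (sq_nonneg _)] using hint

theorem ae_nonneg_sqDensity (hg : Measurable g) (hneg : ∀ t < 0, g t = 0) :
    ∀ᵐ t ∂sqDensity g, 0 ≤ t := by
  rw [sqDensity, ae_withDensity_iff (by fun_prop)]
  refine ae_of_all _ fun t ht => ?_
  by_contra! h
  simp [hneg t h] at ht

end SqDensity

/-- The one-dimensional functions `g` from which the test functions `sieveTest` are built. The
normalisation makes `sqDensity g` a probability measure. -/
structure IsSieveWeight (g : ℝ → ℝ) : Prop where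
  measurable : Measurable g
  nonneg : ∀ t, 0 ≤ g t
  eq_zero_of_neg : ∀ t < 0, g t = 0
  integrable : Integrable g
  integrable_id_mul : Integrable fun t => t * g t
  integrable_sq_mul_sq : Integrable fun t => t ^ 2 * g t ^ 2
  integral_sq : ∫ t, g t ^ 2 = 1

/-- The integral over one variable that `sieveJ` takes of the test function `sieveTest`, as a
function of the sum `σ` of the remaining variables and without their factors `g`. -/
noncomputable def cutoffMass (g : ℝ → ℝ) (δ σ : ℝ) : ℝ :=
  ∫ s, linearCutoff δ (s + σ) * g s

/-- The test function `t ↦ w(t₁ + ⋯ + t_k) g(t₁) ⋯ g(t_k)`, with `w` the linear cutoff. -/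
noncomputable def sieveTest (k : ℕ) (g : ℝ → ℝ) (δ : ℝ) (t : Fin k → ℝ) : ℝ :=
  linearCutoff δ (∑ i, t i) * ∏ i, g (t i)

namespace IsSieveWeight

variable {g : ℝ → ℝ} (hg : IsSieveWeight g)
include hg

theorem integrable_sq : Integrable fun t => g t ^ 2 :=
  .of_integral_ne_zero (by simp [hg.integral_sq])

theorem id_mul_nonneg (t : ℝ) : 0 ≤ t * g t := by
  rcases lt_or_ge t 0 with ht | ht
  · simp [hg.eq_zero_of_neg t ht]
  · exact mul_nonneg ht (hg.nonneg t)

theorem integrable_linearCutoff_mul (δ σ : ℝ) :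
    Integrable fun s => linearCutoff δ (s + σ) * g s := by
  refine hg.integrable.bdd_mul (c := 1) ?_ (ae_of_all _ fun s => ?_)
  · exact ((continuous_linearCutoff δ).comp (by fun_prop)).aestronglyMeasurable
  · simpa [abs_of_nonneg (linearCutoff_nonneg _ _)] using linearCutoff_le_one δ (s + σ)

theorem cutoffMass_nonneg (δ σ : ℝ) : 0 ≤ cutoffMass g δ σ :=
  integral_nonneg fun s => mul_nonneg (linearCutoff_nonneg _ _) (hg.nonneg s)

theorem cutoffMass_le (δ σ : ℝ) : cutoffMass g δ σ ≤ ∫ t, g t :=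
  integral_mono (hg.integrable_linearCutoff_mul δ σ) hg.integrable fun s =>
    mul_le_of_le_one_left (hg.nonneg s) (linearCutoff_le_one _ _)

theorem isProbabilityMeasure : IsProbabilityMeasure (sqDensity g) :=
  isProbabilityMeasure_sqDensity hg.integral_sq

theorem measureReal_pi_sqDensity_le_half {k : ℕ} {b : ℝ} (hmean : k * ∫ t, t * g t ^ 2 < b)
    (hsq : 2 * (k * ∫ t, t ^ 2 * g t ^ 2) ≤ (b - k * ∫ t, t * g t ^ 2) ^ 2) :
    (Measure.pi fun _ : Fin k => sqDensity g).real {t | b ≤ ∑ i, t i} ≤ 1 / 2 := by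
  have := hg.isProbabilityMeasure
  have hMemLp := memLp_id_sqDensity hg.measurable hg.integrable_sq_mul_sq
  have hvar : Var[id; sqDensity g] ≤ ∫ t, t ^ 2 * g t ^ 2 :=
    (variance_le_expectation_sq hMemLp.aestronglyMeasurable).trans_eq
      (integral_sqDensity hg.measurable _)
  have hcheb := measureReal_pi_le_sum_le (ι := Fin k) hMemLp (b := b)
  rw [Fintype.card_fin, integral_sqDensity hg.measurable] at hcheb
  refine (hcheb hmean).trans ((div_le_iff₀ (pow_pos (sub_pos.2 hmean) 2)).2 ?_)
  linarith [mul_le_mul_of_nonneg_left hvar k.cast_nonneg]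

theorem memLp_sieveTest (k : ℕ) (δ : ℝ) : MemLp (sieveTest k g δ) 2 := by
  have hprod : Measurable fun t : Fin k → ℝ => ∏ i, g (t i) :=
    Finset.measurable_prod _ fun i _ => hg.measurable.comp (measurable_pi_apply i)
  have hcut : Continuous fun t : Fin k → ℝ => linearCutoff δ (∑ i, t i) :=
    (continuous_linearCutoff δ).comp (by fun_prop)
  refine MemLp.mono ((memLp_two_iff_integrable_sq hprod.aestronglyMeasurable).2 ?_)
    (hcut.measurable.mul hprod).aestronglyMeasurable (ae_of_all _ fun t => ?_)
  · simp_rw [← Finset.prod_pow]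
    exact Integrable.fintype_prod fun _ => hg.integrable_sq
  · rw [sieveTest, norm_mul]
    refine mul_le_of_le_one_left (norm_nonneg _) ?_
    rw [Real.norm_of_nonneg (linearCutoff_nonneg _ _)]
    exact linearCutoff_le_one _ _

theorem integral_sieveTest_dite {k : ℕ} (δ : ℝ) (i : Fin k) (y : {j // j ≠ i} → ℝ) :
    ∫ s in Set.Ioi 0, sieveTest k g δ (fun j => if h : j = i then s else y ⟨j, h⟩) =
      cutoffMass g δ (∑ j, y j) * ∏ j, g (y j) := by
  rw [← integral_Ici_eq_integral_Ioi, cutoffMass, ← integral_mul_const,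
    setIntegral_eq_integral_of_forall_compl_eq_zero fun s hs => ?_]
  · refine integral_congr_ae (ae_of_all _ fun s => ?_)
    simp only [sieveTest]
    rw [prod_dite_eq_mul_prod i g, sum_dite_eq_add_sum i fun x : ℝ => x, mul_assoc]
  · simp only [sieveTest]
    rw [prod_dite_eq_mul_prod i g, hg.eq_zero_of_neg s (by simpa using hs), zero_mul, mul_zero]

variable {δ : ℝ} (hδ : 0 < δ)
include hδ

theorem antitone_cutoffMass : Antitone (cutoffMass g δ) := fun σ τ h =>
  integral_mono (hg.integrable_linearCutoff_mul δ τ) (hg.integrable_linearCutoff_mul δ σ) fun s =>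
    mul_le_mul_of_nonneg_right (antitone_linearCutoff hδ (by gcongr)) (hg.nonneg s)

theorem integrable_sq_cutoffMass {Ω : Type*} [MeasurableSpace Ω] {μ : Measure Ω}
    [IsFiniteMeasure μ] {S : Ω → ℝ} (hS : Measurable S) :
    Integrable (fun x => cutoffMass g δ (S x) ^ 2) μ := by
  refine .of_bound (C := (∫ t, g t) ^ 2) ?_ (ae_of_all _ fun x => ?_)
  · exact (((hg.antitone_cutoffMass hδ).measurable.comp hS).pow_const 2).aestronglyMeasurable
  · rw [norm_pow, Real.norm_of_nonneg (hg.cutoffMass_nonneg _ _)]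
    exact pow_le_pow_left₀ (hg.cutoffMass_nonneg _ _) (hg.cutoffMass_le _ _) 2

theorem sub_le_cutoffMass (σ : ℝ) :
    (∫ t, g t) * linearCutoff δ σ - (∫ t, t * g t) / δ ≤ cutoffMass g δ σ := by
  rw [← integral_mul_const, ← integral_div,
    ← integral_sub (hg.integrable.mul_const _) (hg.integrable_id_mul.div_const _)]
  refine integral_mono ((hg.integrable.mul_const _).sub (hg.integrable_id_mul.div_const _))
    (hg.integrable_linearCutoff_mul δ σ) fun s => ?_
  rcases lt_or_ge s 0 with hs | hs
  · simp [hg.eq_zero_of_neg s hs]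
  · calc g s * linearCutoff δ σ - s * g s / δ = (linearCutoff δ σ - s / δ) * g s := by ring
      _ ≤ linearCutoff δ (s + σ) * g s :=
        mul_le_mul_of_nonneg_right (linearCutoff_sub_div_le hδ hs) (hg.nonneg s)

theorem sub_le_sq_cutoffMass (σ : ℝ) {t : ℝ} (ht : 0 ≤ t) :
    (∫ t, g t) ^ 2 * linearCutoff δ (t + σ) ^ 2 - 2 * ((∫ t, g t) * ((∫ t, t * g t) / δ)) ≤
      cutoffMass g δ σ ^ 2 := by
  set m := ∫ t, g t
  set b := (∫ t, t * g t) / δ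
  set u := m * linearCutoff δ (t + σ)
  have hm : 0 ≤ m := integral_nonneg hg.nonneg
  have hb : 0 ≤ b := div_nonneg (integral_nonneg hg.id_mul_nonneg) hδ.le
  have hu : 0 ≤ u := mul_nonneg hm (linearCutoff_nonneg _ _)
  have hum : u ≤ m := mul_le_of_le_one_right hm (linearCutoff_le_one _ _)
  have hX : u - b ≤ cutoffMass g δ σ := by
    refine le_trans ?_ (hg.sub_le_cutoffMass hδ σ)
    have hmono := antitone_linearCutoff hδ (le_add_of_nonneg_left ht : σ ≤ t + σ)
    gcongr
    exact mul_le_mul_of_nonneg_left hmono hm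
  -- `x ^ 2 ≥ 2 * x * u - u ^ 2` at `x = cutoffMass g δ σ`, followed by `x ≥ u - b`.
  nlinarith [sq_nonneg (cutoffMass g δ σ - u), mul_le_mul_of_nonneg_right hX hu,
    mul_le_mul_of_nonneg_right hum hb]

theorem sieveTest_eq_zero {k : ℕ} {t : Fin k → ℝ} (ht : t ∉ simplex k 1) :
    sieveTest k g δ t = 0 := by
  by_cases hnn : ∀ i, 0 ≤ t i
  · have hsum : 1 ≤ ∑ i, t i := by
      by_contra! h
      exact ht ⟨hnn, h.le⟩
    rw [sieveTest, linearCutoff_eq_zero hδ hsum, zero_mul]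
  · push Not at hnn
    obtain ⟨i, hi⟩ := hnn
    rw [sieveTest, Finset.prod_eq_zero (Finset.mem_univ i) (hg.eq_zero_of_neg _ hi), mul_zero]

theorem sieveI_sieveTest (k : ℕ) :
    sieveI (sieveTest k g δ) =
      ∫ t : Fin k → ℝ, linearCutoff δ (∑ i, t i) ^ 2 ∂(Measure.pi fun _ => sqDensity g) := by
  rw [sieveI_eq_integral_s14 fun t => hg.sieveTest_eq_zero hδ,
    integral_pi_sqDensity hg.measurable hg.integrable_sq]
  simp only [sieveTest, mul_pow]

theorem sieveJ_sieveTest {k : ℕ} (i : Fin k) :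
    sieveJ i (sieveTest k g δ) = ∫ t : Fin k → ℝ, cutoffMass g δ (∑ j : {j // j ≠ i}, t j) ^ 2
      ∂(Measure.pi fun _ => sqDensity g) := by
  have := hg.isProbabilityMeasure
  have hrestrict := measurePreserving_subtype_restrict (fun _ : Fin k => sqDensity g) (· ≠ i)
  calc sieveJ i (sieveTest k g δ)
      = ∫ y : {j // j ≠ i} → ℝ, cutoffMass g δ (∑ j, y j) ^ 2 * (∏ j, g (y j)) ^ 2 := by
        simp_rw [sieveJ, hg.integral_sieveTest_dite, mul_pow]
        refine setIntegral_eq_integral_of_forall_compl_eq_zero fun y hy => ?_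
        obtain ⟨j, hj⟩ : ∃ j, y j < 0 := by simpa using hy
        rw [Finset.prod_eq_zero (Finset.mem_univ j) (hg.eq_zero_of_neg _ hj),
          zero_pow two_ne_zero, mul_zero]
    _ = ∫ y : {j // j ≠ i} → ℝ, cutoffMass g δ (∑ j, y j) ^ 2
          ∂(Measure.pi fun _ => sqDensity g) :=
        (integral_pi_sqDensity hg.measurable hg.integrable_sq _).symm
    _ = _ := by
        rw [← hrestrict.map_eq, integral_map hrestrict.aemeasurable
          (hg.integrable_sq_cutoffMass hδ (by fun_prop)).aestronglyMeasurable]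

theorem le_sieveJ_sieveTest {k : ℕ} (i : Fin k) :
    (∫ t, g t) ^ 2 * sieveI (sieveTest k g δ) -
      2 * ((∫ t, g t) * ((∫ t, t * g t) / δ)) ≤ sieveJ i (sieveTest k g δ) := by
  have := hg.isProbabilityMeasure
  set ν := Measure.pi fun _ : Fin k => sqDensity g
  set error := 2 * ((∫ t, g t) * ((∫ t, t * g t) / δ))
  have hcut : Integrable (fun t => (∫ s, g s) ^ 2 * linearCutoff δ (∑ j, t j) ^ 2) ν :=
    (integrable_sq_linearCutoff (by fun_prop) δ).const_mul _
  have hnonneg : ∀ᵐ t ∂ν, 0 ≤ t i :=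
    (Measure.tendsto_eval_ae_ae (μ := fun _ : Fin k => sqDensity g)).eventually
      (ae_nonneg_sqDensity hg.measurable hg.eq_zero_of_neg)
  calc (∫ t, g t) ^ 2 * sieveI (sieveTest k g δ) - error
      = ∫ t, ((∫ s, g s) ^ 2 * linearCutoff δ (∑ j, t j) ^ 2 - error) ∂ν := by
        rw [integral_sub hcut (integrable_const _), integral_const_mul, hg.sieveI_sieveTest hδ,
          integral_const, probReal_univ, one_smul]
    _ ≤ ∫ t, cutoffMass g δ (∑ j : {j // j ≠ i}, t j) ^ 2 ∂ν := by
        refine integral_mono_ae (hcut.sub (integrable_const _))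
          (hg.integrable_sq_cutoffMass hδ (by fun_prop)) ?_
        filter_upwards [hnonneg] with t ht
        rw [Fintype.sum_eq_add_sum_subtype_ne _ i]
        exact hg.sub_le_sq_cutoffMass hδ _ ht
    _ = sieveJ i (sieveTest k g δ) := (hg.sieveJ_sieveTest hδ i).symm

theorem half_le_sieveI_sieveTest {k : ℕ} (hmean : k * ∫ t, t * g t ^ 2 < 1 - δ)
    (hsq : 2 * (k * ∫ t, t ^ 2 * g t ^ 2) ≤ (1 - δ - k * ∫ t, t * g t ^ 2) ^ 2) :
    1 / 2 ≤ sieveI (sieveTest k g δ) := by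
  have := hg.isProbabilityMeasure
  set ν := Measure.pi fun _ : Fin k => sqDensity g
  have hmeas : MeasurableSet {t : Fin k → ℝ | 1 - δ ≤ ∑ i, t i} :=
    measurableSet_le measurable_const (by fun_prop)
  calc 1 / 2 ≤ ν.real {t | 1 - δ ≤ ∑ i, t i}ᶜ := by
        rw [probReal_compl_eq_one_sub hmeas]
        linarith [hg.measureReal_pi_sqDensity_le_half hmean hsq]
    _ = ∫ t, Set.indicator {t | 1 - δ ≤ ∑ i, t i}ᶜ 1 t ∂ν :=
        (integral_indicator_one hmeas.compl).symm
    _ ≤ ∫ t, linearCutoff δ (∑ i, t i) ^ 2 ∂ν := by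
        refine integral_mono ((integrable_const 1).indicator hmeas.compl)
          (integrable_sq_linearCutoff (by fun_prop) δ) (Set.indicator_le' (fun t ht => ?_) ?_)
        · have hlt : ¬1 - δ ≤ ∑ i, t i := ht
          simp [linearCutoff_eq_one hδ (not_le.1 hlt).le]
        · exact fun t _ => sq_nonneg _
    _ = sieveI (sieveTest k g δ) := (hg.sieveI_sieveTest hδ k).symm

theorem le_Mquant_of_moments {k : ℕ} (hmean : k * ∫ t, t * g t ^ 2 < 1 - δ)
    (hsq : 2 * (k * ∫ t, t ^ 2 * g t ^ 2) ≤ (1 - δ - k * ∫ t, t * g t ^ 2) ^ 2) :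
    k * ((∫ t, g t) ^ 2 - 4 * ((∫ t, g t) * ((∫ t, t * g t) / δ))) ≤ Mquant k := by
  set m := ∫ t, g t
  set b := (∫ t, t * g t) / δ
  set I := sieveI (sieveTest k g δ)
  have hm : 0 ≤ m := integral_nonneg hg.nonneg
  have hb : 0 ≤ b := div_nonneg (integral_nonneg hg.id_mul_nonneg) hδ.le
  have hI : 1 / 2 ≤ I := hg.half_le_sieveI_sieveTest hδ hmean hsq
  refine le_Mquant (hg.memLp_sieveTest k δ) (fun t => hg.sieveTest_eq_zero hδ)
    (one_half_pos.trans_le hI) ?_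
  have hloss : 2 * (m * b) ≤ 4 * (m * b) * I := by
    nlinarith [mul_nonneg hm hb]
  calc k * (m ^ 2 - 4 * (m * b)) * I = k * (m ^ 2 * I - 4 * (m * b) * I) := by ring
    _ ≤ k * (m ^ 2 * I - 2 * (m * b)) := by gcongr
    _ = ∑ _i : Fin k, (m ^ 2 * I - 2 * (m * b)) := by
        rw [Finset.sum_const, Finset.card_univ, Fintype.card_fin, nsmul_eq_mul]
    _ ≤ ∑ i, sieveJ i (sieveTest k g δ) :=
        Finset.sum_le_sum fun i _ => hg.le_sieveJ_sieveTest hδ i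

end IsSieveWeight

section MaynardWeight

/-- Maynard's weight `t ↦ c / (T + a t)` on `[0, T]`, with `c = √(T (1 + a))` so that its square
has integral `1`. -/
noncomputable def maynardWeight (a T : ℝ) : ℝ → ℝ :=
  Set.indicator (Set.Icc 0 T) fun t => √(T * (1 + a)) / (T + a * t)

variable {a T : ℝ}

theorem maynardWeight_of_notMem {t : ℝ} (ht : t ∉ Set.Icc 0 T) : maynardWeight a T t = 0 :=
  Set.indicator_of_notMem ht _

theorem mul_maynardWeight_pow {n : ℕ} (hn : n ≠ 0) (f : ℝ → ℝ) :
    (fun t => f t * maynardWeight a T t ^ n) = Set.indicator (Set.Icc 0 T) fun t =>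
      √(T * (1 + a)) ^ n * (f t / (T + a * t) ^ n) := by
  funext t
  by_cases ht : t ∈ Set.Icc 0 T
  · simp only [maynardWeight, Set.indicator_of_mem ht]
    ring
  · rw [maynardWeight_of_notMem ht, Set.indicator_of_notMem ht, zero_pow hn, mul_zero]

variable (ha : 0 < a) (hT : 0 < T)
include ha hT

theorem continuousOn_div_pow {f : ℝ → ℝ} (hf : Continuous f) (n : ℕ) :
    ContinuousOn (fun t => f t / (T + a * t) ^ n) (Set.Icc 0 T) := by
  refine hf.continuousOn.div (by fun_prop) fun t ht => ?_
  have := ht.1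
  positivity

theorem integrable_mul_maynardWeight_pow {n : ℕ} (hn : n ≠ 0) {f : ℝ → ℝ} (hf : Continuous f) :
    Integrable fun t => f t * maynardWeight a T t ^ n := by
  rw [mul_maynardWeight_pow hn, integrable_indicator_iff measurableSet_Icc]
  exact ((continuousOn_div_pow ha hT hf n).const_mul _).integrableOn_Icc

theorem integral_mul_maynardWeight_pow {n : ℕ} (hn : n ≠ 0) {f H : ℝ → ℝ} (hf : Continuous f)
    (hH : ∀ t, T + a * t ≠ 0 → HasDerivAt H (f t / (T + a * t) ^ n) t) :
    ∫ t, f t * maynardWeight a T t ^ n = √(T * (1 + a)) ^ n * (H T - H 0) := by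
  rw [mul_maynardWeight_pow hn, integral_indicator measurableSet_Icc, integral_const_mul,
    integral_Icc_eq_integral_Ioc, ← intervalIntegral.integral_of_le hT.le,
    intervalIntegral.integral_eq_sub_of_hasDerivAt (f := H)]
  · intro t ht
    rw [Set.uIcc_of_le hT.le] at ht
    have := ht.1
    exact hH t (by positivity)
  · exact (continuousOn_div_pow ha hT hf n).intervalIntegrable_of_Icc hT.le

theorem integral_mul_maynardWeight_pow_le {n : ℕ} (hn : n ≠ 0) {f : ℝ → ℝ} (hf : Continuous f)
    {B : ℝ} (hB : ∀ t, 0 ≤ t → f t ≤ B * (T + a * t) ^ n) :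
    ∫ t, f t * maynardWeight a T t ^ n ≤ √(T * (1 + a)) ^ n * (T * B) := by
  have hcont := continuousOn_div_pow ha hT hf n
  have hle : ∫ t in Set.Icc 0 T, f t / (T + a * t) ^ n ≤ ∫ _ in Set.Icc 0 T, B := by
    refine setIntegral_mono_on hcont.integrableOn_Icc (integrable_const B) measurableSet_Icc
      fun t ht => ?_
    have := ht.1
    exact (div_le_iff₀ (by positivity)).2 (hB t this)
  rw [mul_maynardWeight_pow hn, integral_indicator measurableSet_Icc, integral_const_mul]
  gcongr
  simpa [hT.le] using hle

theorem log_add_mul_self : Real.log (T + a * T) = Real.log T + Real.log (1 + a) := by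
  rw [← Real.log_mul hT.ne' (by positivity)]
  ring_nf

theorem integral_maynardWeight :
    ∫ t, maynardWeight a T t = √(T * (1 + a)) * (Real.log (1 + a) / a) := by
  have hftc := integral_mul_maynardWeight_pow ha hT one_ne_zero (f := fun _ => 1)
    (H := fun t => Real.log (T + a * t) / a) continuous_const fun t ht => by
      refine (((hasDerivAt_const_mul a).const_add T |>.log ht).div_const a).congr_deriv ?_
      field_simp
  simp only [one_mul, pow_one, mul_zero, add_zero, log_add_mul_self ha hT] at hftc
  rw [hftc]
  ring

theorem integral_sq_maynardWeight : ∫ t, maynardWeight a T t ^ 2 = 1 := by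
  have hftc := integral_mul_maynardWeight_pow ha hT two_ne_zero (f := fun _ => 1)
    (H := fun t => -(T + a * t)⁻¹ / a) continuous_const fun t ht => by
      refine (((hasDerivAt_const_mul a).const_add T |>.inv ht).neg.div_const a).congr_deriv ?_
      field_simp
  simp only [one_mul] at hftc
  rw [hftc, Real.sq_sqrt (by positivity)]
  field_simp
  ring

theorem integral_mul_sq_maynardWeight :
    ∫ t, t * maynardWeight a T t ^ 2 = T * ((1 + a) * Real.log (1 + a) - a) / a ^ 2 := by
  have hftc := integral_mul_maynardWeight_pow ha hT two_ne_zero (f := fun t => t)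
    (H := fun t => (Real.log (T + a * t) + T * (T + a * t)⁻¹) / a ^ 2) continuous_id fun t ht => by
      have hlin := (hasDerivAt_const_mul a (x := t)).const_add T
      refine (((hlin.log ht).add ((hlin.inv ht).const_mul T)).div_const (a ^ 2)).congr_deriv ?_
      field_simp
      ring
  rw [hftc, Real.sq_sqrt (by positivity), log_add_mul_self ha hT]
  field_simp
  ring_nf

theorem integral_id_mul_maynardWeight_le :
    ∫ t, t * maynardWeight a T t ≤ √(T * (1 + a)) * (T / a) := by
  have hle := integral_mul_maynardWeight_pow_le ha hT one_ne_zero (f := fun t => t) (B := 1 / a)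
    continuous_id fun t _ => by
      simp only [pow_one]
      field_simp
      linarith
  simpa only [pow_one, mul_one_div] using hle

theorem integral_sq_mul_sq_maynardWeight_le :
    ∫ t, t ^ 2 * maynardWeight a T t ^ 2 ≤ T ^ 2 * (1 + a) / a ^ 2 := by
  have hle := integral_mul_maynardWeight_pow_le ha hT two_ne_zero (continuous_pow 2)
    (B := 1 / a ^ 2) fun t ht => by
      rw [one_div_mul_eq_div, ← div_pow]
      gcongr
      rw [le_div_iff₀ ha]
      linarith
  rw [Real.sq_sqrt (by positivity)] at hle
  refine hle.trans_eq ?_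
  ring

theorem isSieveWeight_maynardWeight : IsSieveWeight (maynardWeight a T) where
  measurable := (by fun_prop : Measurable _).indicator measurableSet_Icc
  nonneg := Set.indicator_nonneg fun t ht => by
    have := ht.1
    positivity
  eq_zero_of_neg t ht := maynardWeight_of_notMem fun h => h.1.not_gt ht
  integrable := by
    simpa using integrable_mul_maynardWeight_pow ha hT one_ne_zero (continuous_const (y := (1:ℝ)))
  integrable_id_mul := by
    simpa using integrable_mul_maynardWeight_pow ha hT one_ne_zero continuous_id
  integrable_sq_mul_sq := integrable_mul_maynardWeight_pow ha hT two_ne_zero (continuous_pow 2)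
  integral_sq := integral_sq_maynardWeight ha hT

theorem mul_integral_mul_sq_maynardWeight_le :
    a * ∫ t, t * maynardWeight a T t ^ 2 ≤ T * Real.log (1 + a) := by
  have hlog : Real.log (1 + a) ≤ a :=
    (Real.log_le_sub_one_of_pos (by positivity)).trans_eq (add_sub_cancel_left 1 a)
  rw [integral_mul_sq_maynardWeight ha hT, mul_div_assoc', div_le_iff₀ (by positivity)]
  linarith [mul_le_mul_of_nonneg_left hlog (mul_pos ha hT).le]

theorem mul_integral_sq_mul_sq_maynardWeight_le :
    a * ∫ t, t ^ 2 * maynardWeight a T t ^ 2 ≤ T ^ 2 * ((1 + a) / a) :=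
  (mul_le_mul_of_nonneg_left (integral_sq_mul_sq_maynardWeight_le ha hT) ha.le).trans_eq
    (by field_simp)

theorem le_mul_sq_integral_sub_maynardWeight :
    T * (1 + a) / a * (Real.log (1 + a) ^ 2 - 4 * Real.log (1 + a)) ≤
      a * ((∫ t, maynardWeight a T t) ^ 2 -
        4 * ((∫ t, maynardWeight a T t) * ((∫ t, t * maynardWeight a T t) / T))) := by
  set L := Real.log (1 + a)
  have hL : 0 ≤ L := Real.log_nonneg (by linarith)
  have hloss : (∫ t, t * maynardWeight a T t) / T ≤ √(T * (1 + a)) / a := by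
    rw [div_le_iff₀ hT]
    exact (integral_id_mul_maynardWeight_le ha hT).trans_eq (by ring)
  rw [integral_maynardWeight ha hT]
  calc T * (1 + a) / a * (L ^ 2 - 4 * L)
      = √(T * (1 + a)) ^ 2 / a * (L ^ 2 - 4 * L) := by rw [Real.sq_sqrt (by positivity)]
    _ = a * ((√(T * (1 + a)) * (L / a)) ^ 2 -
          4 * (√(T * (1 + a)) * (L / a) * (√(T * (1 + a)) / a))) := by field_simp
    _ ≤ _ := by gcongr

end MaynardWeight

theorem Mk_lower_bound_general {k : ℕ} (hk : 0 < k) : Real.log (1 + k) - 7 ≤ Mquant k := by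
  have hk₀ : (0 : ℝ) < k := mod_cast hk
  have hk₁ : (1 : ℝ) ≤ k := mod_cast hk
  set L := Real.log (1 + k)
  have hL : 0 ≤ L := Real.log_nonneg (by linarith)
  -- The mean of `t₁ + ⋯ + t_k` is at most `T * L = 1 - 3 * T`, at distance `2 * T` from `1 - T`.
  set T := 1 / (L + 3)
  have hT : 0 < T := by positivity
  have hTL : T * (L + 3) = 1 := one_div_mul_cancel (by positivity)
  have hgap : 2 * T ≤ 1 - T - k * ∫ t, t * maynardWeight k T t ^ 2 := by
    linarith [mul_integral_mul_sq_maynardWeight_le hk₀ hT]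
  have hsq : k * ∫ t, t ^ 2 * maynardWeight k T t ^ 2 ≤ T ^ 2 * 2 :=
    (mul_integral_sq_mul_sq_maynardWeight_le hk₀ hT).trans <| by
      gcongr
      rw [div_le_iff₀ hk₀]
      linarith
  calc L - 7 ≤ T * (1 + k) / k * (L ^ 2 - 4 * L) := by
        rw [one_div_mul_eq_div, div_div, div_mul_eq_mul_div, le_div_iff₀ (by positivity)]
        nlinarith [sq_nonneg (L - 2)]
    _ ≤ _ := le_mul_sq_integral_sub_maynardWeight hk₀ hT
    _ ≤ Mquant k := (isSieveWeight_maynardWeight hk₀ hT).le_Mquant_of_moments hT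
        (by linarith) (by linarith [pow_le_pow_left₀ (by positivity) hgap 2])

/-- **Polymath8b, Theorem 3.9(xi)**: there is an absolute constant `C > 0` with
`M_k ≥ log k − C` for all `k ≥ C`. -/
theorem Mk_lower_bound : ∃ C : ℝ, 0 < C ∧ ∀ k : ℕ, C ≤ (k : ℝ) →
    Real.log k - C ≤ Mquant k := by
  refine ⟨7, by norm_num, fun k hk => ?_⟩
  have hk₀ : (0 : ℝ) < k := by linarith
  refine le_trans ?_ (Mk_lower_bound_general (Nat.cast_pos.1 hk₀))
  gcongr
  linarith
end
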